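/- arXiv:1506.01755 — 2 statements merged into one kernel-verified Lean document; each statement's English description precedes it below -/
import Mathlib

section
/- For every natural number l, the limit L_l = lim_{N→∞} [ Σ_{k=2}^{N} Λ(k)(log k)^l / k − (log N)^{l+1}/(l+1) ] exists (as a limit of a real sequence indexed by N), where Λ is the von Mangoldt function. (Existence of the generalized Stieltjes-type constants η_l = ((−1)^l / l!) L_l appearing in the arithmetic formula for the Li coefficients of the Riemann zeta function.) -/
open Finset Filter Topology

/-!
Near the line `Re s = 1` the entire function `riemannZeta₁ s = (s - 1) ζ(s)` and its derivatives are
`O(|Im s| ^ (1 + ε))`, and the inequality `3 + 4 cos θ + cos (2 θ) ≥ 0` gives the matching lower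
bound `|Im s| ^ (1 - ε)` uniformly up to that line. Hence every derivative of the Mellin transform
of `ψ(x) - x` is bounded for `1 < Re s < 2`. On the Fourier side this bounds the integral of
`ψ(eᵘ) - eᵘ`, with weight `uᵏ e ^ (-σu)`, against a bump, uniformly in `σ > 1`. As `ψ` is monotone,
a large value of `|ψ(x) - x|` persists on an interval around `x` where it would be seen by the bump,
so `ψ(x) - x = O(x / (log x) ^ A)` for every `A`. Finally, Abel summation writes the sequence as a
boundary term tending to `0`, plus a constant, plus an integral dominated by that of
`1 / (t (log t) ^ 2)`.
-/

open MeasureTheory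
open Complex.HadamardThreeLines (verticalStrip)
open scoped FourierTransform SchwartzMap

lemma le_rpow_mul_rpow_of_le_of_le {u A B θ : ℝ} (hu : 0 ≤ u) (hA : u ≤ A) (hB : u ≤ B)
    (h0 : 0 ≤ θ) (h1 : θ ≤ 1) : u ≤ A ^ (1 - θ) * B ^ θ :=
  calc u = u ^ (1 - θ) * u ^ θ := by
        rw [← Real.rpow_add' hu (by simp), sub_add_cancel, Real.rpow_one]
    _ ≤ A ^ (1 - θ) * B ^ θ := by
        have := sub_nonneg.2 h1
        have := hu.trans hA
        gcongr

section cpow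

variable {a x : ℝ} {s : ℂ}

lemma norm_ofReal_cpow_neg_le (ha : 0 < a) (hx : a ≤ x) (hs : 0 ≤ s.re) :
    ‖(x : ℂ) ^ (-s)‖ ≤ a ^ (-s.re) := by
  rw [Complex.norm_cpow_eq_rpow_re_of_pos (ha.trans_le hx), Complex.neg_re]
  exact Real.rpow_le_rpow_of_nonpos ha hx (neg_nonpos.2 hs)

lemma hasDerivAt_ofReal_cpow_neg (hx : 0 < x) (s : ℂ) :
    HasDerivAt (fun y : ℝ ↦ (y : ℂ) ^ (-s)) (-s * (x : ℂ) ^ (-s - 1)) x := by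
  simpa using ((hasDerivAt_id (x : ℂ)).cpow_const (c := -s)
    (Or.inl (by simpa using hx))).comp_ofReal

lemma norm_cpow_neg_sub_cpow_neg_le_sub (ha : 0 < a) (hx : a ≤ x) (hs : 0 ≤ s.re) :
    ‖(a : ℂ) ^ (-s) - (x : ℂ) ^ (-s)‖ ≤ ‖s‖ * a ^ (-(s.re + 1)) * (x - a) := by
  rw [norm_sub_rev]
  refine norm_image_sub_le_of_norm_deriv_le_segment'
    (fun y hy ↦ (hasDerivAt_ofReal_cpow_neg (ha.trans_le hy.1) s).hasDerivWithinAt)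
    (fun y hy ↦ ?_) x (Set.right_mem_Icc.2 hx)
  rw [norm_mul, norm_neg, ← neg_add']
  gcongr
  simpa using norm_ofReal_cpow_neg_le (s := s + 1) ha hy.1
    (by rw [Complex.add_re, Complex.one_re]; positivity)

lemma norm_cpow_neg_sub_cpow_neg_le {θ : ℝ} (ha : 0 < a) (hx : x ∈ Set.Icc a (a + 1))
    (hs : 0 ≤ s.re) (h0 : 0 ≤ θ) (h1 : θ ≤ 1) :
    ‖(a : ℂ) ^ (-s) - (x : ℂ) ^ (-s)‖ ≤ 2 * ‖s‖ ^ θ * a ^ (-(s.re + θ)) := by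
  have trivial_bound : ‖(a : ℂ) ^ (-s) - (x : ℂ) ^ (-s)‖ ≤ 2 * a ^ (-s.re) := by
    linarith [norm_sub_le ((a : ℂ) ^ (-s)) ((x : ℂ) ^ (-s)),
      norm_ofReal_cpow_neg_le ha le_rfl hs, norm_ofReal_cpow_neg_le ha hx.1 hs]
  have deriv_bound : ‖(a : ℂ) ^ (-s) - (x : ℂ) ^ (-s)‖ ≤ ‖s‖ * a ^ (-(s.re + 1)) :=
    (norm_cpow_neg_sub_cpow_neg_le_sub ha hx.1 hs).trans
      (mul_le_of_le_one_right (by positivity) (by linarith [hx.2]))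
  calc ‖(a : ℂ) ^ (-s) - (x : ℂ) ^ (-s)‖
      ≤ (2 * a ^ (-s.re)) ^ (1 - θ) * (‖s‖ * a ^ (-(s.re + 1))) ^ θ :=
        le_rpow_mul_rpow_of_le_of_le (norm_nonneg _) trivial_bound deriv_bound h0 h1
    _ = 2 ^ (1 - θ) * ‖s‖ ^ θ * (a ^ (-s.re * (1 - θ)) * a ^ (-(s.re + 1) * θ)) := by
        rw [Real.mul_rpow (by positivity) (by positivity),
          Real.mul_rpow (by positivity) (by positivity), ← Real.rpow_mul ha.le,
          ← Real.rpow_mul ha.le]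
        ring
    _ = 2 ^ (1 - θ) * ‖s‖ ^ θ * a ^ (-(s.re + θ)) := by
        rw [← Real.rpow_add ha]
        ring_nf
    _ ≤ 2 * ‖s‖ ^ θ * a ^ (-(s.re + θ)) := by
        gcongr
        exact Real.rpow_le_self_of_one_le one_le_two (by linarith)

end cpow

/-- The `n`-th term of the series `riemannZeta₁ s = 1 + ∑' n, zeta₁Term n s`, obtained by comparing
`(n + 1) ^ (-s)` with the integral of `x ^ (-s)` over `[n + 1, n + 2]`. -/
noncomputable def zeta₁Term (n : ℕ) (s : ℂ) : ℂ :=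
  (s - 1) * (n + 1 : ℂ) ^ (-s) + ((n + 2 : ℂ) ^ (1 - s) - (n + 1 : ℂ) ^ (1 - s))

lemma zeta₁Term_eq_integral (n : ℕ) (s : ℂ) :
    zeta₁Term n s = (s - 1) * ∫ x in (n + 1 : ℝ)..(n + 1 + 1 : ℝ),
      (((n + 1 : ℝ) : ℂ) ^ (-s) - (x : ℂ) ^ (-s)) := by
  rcases eq_or_ne s 1 with rfl | hs
  · simp [zeta₁Term]
  have hs' : -s + 1 ≠ 0 := by rwa [neg_add_eq_sub, sub_ne_zero, ne_comm]
  have h0 : (0 : ℝ) ∉ Set.uIcc (n + 1 : ℝ) (n + 1 + 1) := by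
    rw [Set.uIcc_of_le (by linarith)]
    exact fun h ↦ absurd h.1 (not_le.2 (by positivity))
  rw [intervalIntegral.integral_sub intervalIntegrable_const
    (intervalIntegral.intervalIntegrable_cpow (Or.inr h0)),
    integral_cpow (Or.inr ⟨by simpa [neg_eq_iff_eq_neg] using hs, h0⟩),
    intervalIntegral.integral_const, zeta₁Term, add_sub_cancel_left, one_smul]
  field_simp
  push_cast
  ring_nf

lemma norm_zeta₁Term_le (n : ℕ) {s : ℂ} {θ : ℝ} (hs : 0 ≤ s.re) (h0 : 0 ≤ θ) (h1 : θ ≤ 1) :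
    ‖zeta₁Term n s‖ ≤ ‖s - 1‖ * (2 * ‖s‖ ^ θ * (n + 1 : ℝ) ^ (-(s.re + θ))) := by
  rw [zeta₁Term_eq_integral, norm_mul]
  gcongr
  refine (intervalIntegral.norm_integral_le_of_norm_le_const fun x hx ↦
    norm_cpow_neg_sub_cpow_neg_le (by positivity) ?_ hs h0 h1).trans_eq (by simp)
  rw [Set.uIoc_of_le (by linarith)] at hx
  exact Set.Ioc_subset_Icc_self hx

lemma differentiable_zeta₁Term (n : ℕ) : Differentiable ℂ (zeta₁Term n) := by
  have h1 : (n + 1 : ℂ) ≠ 0 := Nat.cast_add_one_ne_zero n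
  have h2 : (n + 2 : ℂ) ≠ 0 := by exact_mod_cast Nat.succ_ne_zero (n + 1)
  unfold zeta₁Term
  fun_prop (disch := simp [h1, h2])

lemma one_add_sum_range_zeta₁Term (N : ℕ) (s : ℂ) :
    1 + ∑ n ∈ range N, zeta₁Term n s =
      (s - 1) * ∑ n ∈ range N, 1 / (n + 1 : ℂ) ^ s + (N + 1 : ℂ) ^ (1 - s) := by
  induction N with
  | zero => simp
  | succ N ih =>
    rw [sum_range_succ, sum_range_succ, ← add_assoc, ih, zeta₁Term, Complex.cpow_neg]
    push_cast
    ring_nf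

lemma riemannZeta₁_eq_sub_one_mul {s : ℂ} (hs : s ≠ 1) :
    riemannZeta₁ s = (s - 1) * riemannZeta s := by
  rw [riemannZeta_eq_inv_sub_mul hs, mul_inv_cancel_left₀ (sub_ne_zero.2 hs)]

lemma tendsto_one_add_sum_range_zeta₁Term {s : ℂ} (hs : 1 < s.re) :
    Tendsto (fun N ↦ 1 + ∑ n ∈ range N, zeta₁Term n s) atTop (𝓝 (riemannZeta₁ s)) := by
  have hs1 : s ≠ 1 := by rintro rfl; simp at hs
  have zeta_sum : Tendsto (fun N : ℕ ↦ ∑ n ∈ range N, 1 / (n + 1 : ℂ) ^ s) atTop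
      (𝓝 (riemannZeta s)) := by
    rw [zeta_eq_tsum_one_div_nat_add_one_cpow hs]
    refine Summable.tendsto_sum_tsum_nat ?_
    simpa using (summable_nat_add_iff 1).2 (Complex.summable_one_div_nat_cpow.2 hs)
  have boundary : Tendsto (fun N : ℕ ↦ (N + 1 : ℂ) ^ (1 - s)) atTop (𝓝 0) := by
    rw [tendsto_zero_iff_norm_tendsto_zero]
    refine ((tendsto_rpow_neg_atTop (sub_pos.2 hs)).comp
      (tendsto_atTop_add_const_right _ (1 : ℝ) tendsto_natCast_atTop_atTop)).congr fun N ↦ ?_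
    have := Complex.norm_cpow_eq_rpow_re_of_pos (x := N + 1) (by positivity) (1 - s)
    simpa using this.symm
  simp only [one_add_sum_range_zeta₁Term]
  convert (zeta_sum.const_mul (s - 1)).add boundary using 2
  rw [riemannZeta₁_eq_sub_one_mul hs1, add_zero]

lemma summable_nat_add_one_rpow_neg {p : ℝ} (hp : 1 < p) :
    Summable fun n : ℕ ↦ (n + 1 : ℝ) ^ (-p) := by
  simpa using (summable_nat_add_iff 1).2 (Real.summable_nat_rpow.2 (neg_lt_neg hp))

section halfPlane

variable {ε : ℝ}

lemma norm_zeta₁Term_le_of_le_re (hε : 0 ≤ ε) (hε' : ε ≤ 1 / 2) {s : ℂ} (hs : 1 - ε ≤ s.re)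
    (n : ℕ) : ‖zeta₁Term n s‖ ≤ 2 * ‖s - 1‖ * ‖s‖ ^ (2 * ε) * (n + 1 : ℝ) ^ (-(1 + ε)) :=
  calc ‖zeta₁Term n s‖ ≤ ‖s - 1‖ * (2 * ‖s‖ ^ (2 * ε) * (n + 1 : ℝ) ^ (-(s.re + 2 * ε))) :=
        norm_zeta₁Term_le n (by linarith) (by linarith) (by linarith)
    _ ≤ ‖s - 1‖ * (2 * ‖s‖ ^ (2 * ε) * (n + 1 : ℝ) ^ (-(1 + ε))) := by
        gcongr ‖s - 1‖ * (2 * ‖s‖ ^ (2 * ε) * (n + 1 : ℝ) ^ ?_)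
        · linarith [n.cast_nonneg (α := ℝ)]
        · linarith
    _ = 2 * ‖s - 1‖ * ‖s‖ ^ (2 * ε) * (n + 1 : ℝ) ^ (-(1 + ε)) := by ring

lemma differentiableOn_tsum_zeta₁Term (hε : 0 < ε) (hε' : ε ≤ 1 / 2) :
    DifferentiableOn ℂ (fun s ↦ ∑' n, zeta₁Term n s) {s | 1 - ε < s.re} := by
  intro s hs
  have isOpen_inter : IsOpen ({z : ℂ | 1 - ε < z.re} ∩ Metric.ball 0 (‖s‖ + 1)) :=
    (isOpen_lt continuous_const Complex.continuous_re).inter Metric.isOpen_ball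
  refine ((Complex.differentiableOn_tsum_of_summable_norm
    (u := fun n : ℕ ↦ 2 * (‖s‖ + 1 + 1) * (‖s‖ + 1) ^ (2 * ε) * (n + 1 : ℝ) ^ (-(1 + ε)))
    ((summable_nat_add_one_rpow_neg (by linarith)).mul_left _)
    (fun n ↦ (differentiable_zeta₁Term n).differentiableOn) isOpen_inter ?_).differentiableAt
    (isOpen_inter.mem_nhds ⟨hs, by simp⟩)).differentiableWithinAt
  rintro n z ⟨hz, hz'⟩
  rw [mem_ball_zero_iff] at hz'
  refine (norm_zeta₁Term_le_of_le_re hε.le hε' (le_of_lt hz) n).trans ?_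
  have : ‖z - 1‖ ≤ ‖z‖ + 1 := by simpa using norm_sub_le z 1
  gcongr
  exact this.trans (by linarith)

lemma riemannZeta₁_eq_one_add_tsum (hε : 0 < ε) (hε' : ε ≤ 1 / 2) {s : ℂ} (hs : 1 - ε < s.re) :
    riemannZeta₁ s = 1 + ∑' n, zeta₁Term n s := by
  have isOpen_halfPlane (c : ℝ) : IsOpen {z : ℂ | c < z.re} :=
    isOpen_lt continuous_const Complex.continuous_re
  have eventuallyEq : riemannZeta₁ =ᶠ[𝓝 2] fun z ↦ 1 + ∑' n, zeta₁Term n z := by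
    filter_upwards [(isOpen_halfPlane 1).mem_nhds (show (1 : ℝ) < (2 : ℂ).re by simp)]
      with z (hz : 1 < z.re)
    have : Summable fun n ↦ zeta₁Term n z := .of_norm_bounded
      ((summable_nat_add_one_rpow_neg (by linarith)).mul_left _)
      (norm_zeta₁Term_le_of_le_re hε.le hε' (by linarith))
    exact tendsto_nhds_unique (tendsto_one_add_sum_range_zeta₁Term hz)
      (this.tendsto_sum_tsum_nat.const_add 1)
  exact AnalyticOnNhd.eqOn_of_preconnected_of_eventuallyEq
    (differentiable_riemannZeta₁.differentiableOn.analyticOnNhd (isOpen_halfPlane (1 - ε)))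
    (((differentiableOn_tsum_zeta₁Term hε hε').const_add 1).analyticOnNhd (isOpen_halfPlane _))
    (convex_halfSpace_re_gt _).isPreconnected (show 1 - ε < (2 : ℂ).re by simp; linarith)
    eventuallyEq hs

lemma exists_norm_riemannZeta₁_le (hε : 0 < ε) (hε' : ε ≤ 1 / 2) :
    ∃ C > 0, ∀ s : ℂ, 1 - ε < s.re → ‖riemannZeta₁ s‖ ≤ 1 + C * ‖s - 1‖ * ‖s‖ ^ (2 * ε) := by
  have summable := summable_nat_add_one_rpow_neg (by linarith : 1 < 1 + ε)
  have tsum_pos := summable.tsum_pos (fun n ↦ by positivity) 0 (by simp)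
  refine ⟨2 * ∑' n : ℕ, (n + 1 : ℝ) ^ (-(1 + ε)), by positivity, fun s hs ↦ ?_⟩
  rw [riemannZeta₁_eq_one_add_tsum hε hε' hs]
  refine (norm_add_le _ _).trans (add_le_add norm_one.le ?_)
  refine (tsum_of_norm_bounded (summable.hasSum.mul_left _)
    (norm_zeta₁Term_le_of_le_re hε.le hε' hs.le)).trans_eq ?_
  ring

end halfPlane

/-- `HasVerticalGrowth S n α f` says that `f` is holomorphic on `S` and that on `S` each of its
derivatives of order at most `n` is `O((1 + |Im s|) ^ β)` for every `β > α`. The exponent `α` itself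
is excluded so that an arbitrarily small loss in the exponent is harmless. -/
def HasVerticalGrowth (S : Set ℂ) (n : ℕ) (α : ℝ) (f : ℂ → ℂ) : Prop :=
  DifferentiableOn ℂ f S ∧ ∀ k ≤ n, ∀ β > α,
    iteratedDeriv k f =O[𝓟 S] fun s ↦ (1 + |s.im|) ^ β

lemma one_add_abs_im_rpow_le (β : ℝ) (z s : ℂ) :
    (1 + |z.im|) ^ β ≤ (1 + ‖z - s‖) ^ |β| * (1 + |s.im|) ^ β := by
  have one_add_abs_im_le (z s : ℂ) : 1 + |z.im| ≤ (1 + ‖z - s‖) * (1 + |s.im|) := by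
    have := Complex.abs_im_le_norm (z - s)
    rw [Complex.sub_im] at this
    nlinarith [abs_sub_abs_le_abs_sub z.im s.im, mul_nonneg (norm_nonneg (z - s)) (abs_nonneg s.im)]
  rcases le_total 0 β with hβ | hβ
  · rw [abs_of_nonneg hβ, ← Real.mul_rpow (by positivity) (by positivity)]
    exact Real.rpow_le_rpow (by positivity) (one_add_abs_im_le z s) hβ
  · rw [abs_of_nonpos hβ, Real.rpow_neg (by positivity), ← div_eq_inv_mul,
      le_div_iff₀ (by positivity), ← Real.mul_rpow (by positivity) (by positivity), mul_comm]
    refine Real.rpow_le_rpow_of_nonpos (by positivity) ?_ hβ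
    simpa only [norm_sub_rev] using one_add_abs_im_le s z

namespace HasVerticalGrowth

variable {S : Set ℂ} {n : ℕ} {α β : ℝ} {f g : ℂ → ℂ}

lemma congr (hS : IsOpen S) (hf : HasVerticalGrowth S n α f) (hfg : S.EqOn f g) :
    HasVerticalGrowth S n α g :=
  ⟨hf.1.congr fun _ hs ↦ (hfg hs).symm, fun k hk γ hγ ↦ (hf.2 k hk γ hγ).congr'
    (eventually_principal.2 (hfg.iteratedDeriv_of_isOpen hS k)) .rfl⟩

lemma of_le (hf : HasVerticalGrowth S n α f) {m : ℕ} (hm : m ≤ n) : HasVerticalGrowth S m α f :=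
  ⟨hf.1, fun k hk ↦ hf.2 k (hk.trans hm)⟩

lemma zero_iff : HasVerticalGrowth S 0 α f ↔
    DifferentiableOn ℂ f S ∧ ∀ β > α, f =O[𝓟 S] fun s ↦ (1 + |s.im|) ^ β := by
  simp [HasVerticalGrowth]

lemma succ_iff (hS : IsOpen S) : HasVerticalGrowth S (n + 1) α f ↔
    HasVerticalGrowth S 0 α f ∧ HasVerticalGrowth S n α (deriv f) := by
  refine ⟨fun h ↦ ⟨h.of_le n.succ.zero_le, h.1.deriv hS, fun k hk γ hγ ↦ ?_⟩,
    fun h ↦ ⟨h.1.1, fun k hk γ hγ ↦ ?_⟩⟩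
  · simpa only [iteratedDeriv_succ'] using h.2 (k + 1) (by lia) γ hγ
  · cases k with
    | zero => exact h.1.2 0 le_rfl γ hγ
    | succ k => simpa only [iteratedDeriv_succ'] using h.2.2 k (by lia) γ hγ

lemma deriv (hS : IsOpen S) (hf : HasVerticalGrowth S (n + 1) α f) :
    HasVerticalGrowth S n α (deriv f) :=
  ((succ_iff hS).1 hf).2

lemma const (c : ℂ) : HasVerticalGrowth S n 0 fun _ ↦ c := by
  refine ⟨differentiableOn_const c, fun k _ γ hγ ↦ .of_bound ‖c‖ (eventually_principal.2 ?_)⟩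
  intro s _
  have : 1 ≤ ‖(1 + |s.im|) ^ γ‖ :=
    (Real.one_le_rpow (by simp) hγ.le).trans (Real.le_norm_self _)
  rw [iteratedDeriv_const]
  split_ifs
  · exact le_mul_of_one_le_right (norm_nonneg c) this
  · simpa using by positivity

lemma neg (hf : HasVerticalGrowth S n α f) : HasVerticalGrowth S n α (-f) :=
  ⟨hf.1.neg, fun k hk γ hγ ↦
    (hf.2 k hk γ hγ).neg_left.congr_left fun s ↦ (iteratedDeriv_neg k f s).symm⟩

lemma add (hS : IsOpen S) (hf : HasVerticalGrowth S n α f) (hg : HasVerticalGrowth S n α g) :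
    HasVerticalGrowth S n α (f + g) := by
  refine ⟨hf.1.add hg.1, fun k hk γ hγ ↦ ((hf.2 k hk γ hγ).add (hg.2 k hk γ hγ)).congr'
    (eventually_principal.2 fun s hs ↦ ?_) .rfl⟩
  exact (iteratedDeriv_add ((hf.1.contDiffOn hS).contDiffAt (hS.mem_nhds hs))
    ((hg.1.contDiffOn hS).contDiffAt (hS.mem_nhds hs))).symm

lemma mul (hS : IsOpen S) (hf : HasVerticalGrowth S n α f) (hg : HasVerticalGrowth S n β g) :
    HasVerticalGrowth S n (α + β) (f * g) := by
  induction n generalizing f g α β with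
  | zero =>
    rw [zero_iff] at *
    refine ⟨hf.1.mul hg.1, fun γ hγ ↦ ?_⟩
    refine ((hf.2 (α + (γ - (α + β)) / 2) (by linarith)).mul
      (hg.2 (β + (γ - (α + β)) / 2) (by linarith))).congr_right fun s ↦ ?_
    rw [← Real.rpow_add (by positivity)]
    ring_nf
  | succ n ih =>
    refine (succ_iff hS).2 ⟨(ih (hf.of_le n.le_succ) (hg.of_le n.le_succ)).of_le n.zero_le, ?_⟩
    have : HasVerticalGrowth S n (α + β) (_root_.deriv f * g + f * _root_.deriv g) :=
      (ih (hf.deriv hS) (hg.of_le n.le_succ)).add hS (ih (hf.of_le n.le_succ) (hg.deriv hS))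
    refine this.congr hS fun s hs ↦ ?_
    exact (deriv_mul (hf.1.differentiableAt (hS.mem_nhds hs))
      (hg.1.differentiableAt (hS.mem_nhds hs))).symm

lemma inv (hS : IsOpen S) (hf : HasVerticalGrowth S n α f) (hf0 : ∀ s ∈ S, f s ≠ 0)
    (hinv : HasVerticalGrowth S 0 (-α) f⁻¹) : HasVerticalGrowth S n (-α) f⁻¹ := by
  induction n with
  | zero => exact hinv
  | succ n ih =>
    refine (succ_iff hS).2 ⟨hinv, ?_⟩
    have ih := ih (hf.of_le n.le_succ)
    have : HasVerticalGrowth S n (α + -α + -α) (-(_root_.deriv f * f⁻¹ * f⁻¹)) :=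
      (((hf.deriv hS).mul hS ih).mul hS ih).neg
    rw [add_neg_cancel, zero_add] at this
    refine this.congr hS fun s hs ↦ ?_
    rw [Pi.neg_apply, Pi.mul_apply, Pi.mul_apply,
      deriv_inv'' (hf.1.differentiableAt (hS.mem_nhds hs)) (hf0 s hs), Pi.inv_apply]
    ring

lemma of_thickening (hf : Differentiable ℂ f)
    (h : ∀ β > α, ∃ ε > 0, f =O[𝓟 (Metric.thickening ε S)] fun s ↦ (1 + |s.im|) ^ β) :
    HasVerticalGrowth S n α f := by
  refine ⟨hf.differentiableOn, fun k _ β hβ ↦ ?_⟩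
  obtain ⟨ε, hε, hfε⟩ := h β hβ
  obtain ⟨C, hC, hfC⟩ := hfε.exists_pos
  rw [Asymptotics.isBigOWith_principal] at hfC
  set r := ε / 2
  have hr : 0 < r := half_pos hε
  refine .of_bound (k.factorial * (C * (1 + r) ^ |β|) / r ^ k)
    (eventually_principal.2 fun s hs ↦ ?_)
  have sphere_bound (z : ℂ) (hz : z ∈ Metric.sphere s r) :
      ‖f z‖ ≤ C * (1 + r) ^ |β| * (1 + |s.im|) ^ β := by
    rw [mem_sphere_iff_norm] at hz
    have hzε : z ∈ Metric.thickening ε S :=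
      Metric.mem_thickening_iff.2 ⟨s, hs, by rw [dist_eq_norm, hz]; exact half_lt_self hε⟩
    calc ‖f z‖ ≤ C * (1 + |z.im|) ^ β := by
          simpa [Real.norm_of_nonneg (show 0 ≤ (1 + |z.im|) ^ β by positivity)] using hfC z hzε
      _ ≤ C * ((1 + r) ^ |β| * (1 + |s.im|) ^ β) := by
          gcongr
          exact hz ▸ one_add_abs_im_rpow_le β z s
      _ = C * (1 + r) ^ |β| * (1 + |s.im|) ^ β := by ring
  calc ‖iteratedDeriv k f s‖
      ≤ k.factorial * (C * (1 + r) ^ |β| * (1 + |s.im|) ^ β) / r ^ k :=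
        Complex.norm_iteratedDeriv_le_of_forall_mem_sphere_norm_le k hr hf.diffContOnCl sphere_bound
    _ = k.factorial * (C * (1 + r) ^ |β|) / r ^ k * ‖(1 + |s.im|) ^ β‖ := by
        rw [Real.norm_of_nonneg (by positivity)]
        ring

end HasVerticalGrowth

lemma isOpen_verticalStrip (a b : ℝ) : IsOpen (verticalStrip a b) :=
  isOpen_Ioo.preimage Complex.continuous_re

lemma re_mem_of_mem_thickening_verticalStrip {a b ε : ℝ} {s : ℂ}
    (hs : s ∈ Metric.thickening ε (verticalStrip a b)) : s.re ∈ Set.Ioo (a - ε) (b + ε) := by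
  obtain ⟨z, ⟨hz, hz'⟩, hsz⟩ := Metric.mem_thickening_iff.1 hs
  have re_close : |s.re - z.re| < ε := by
    simpa using (Complex.abs_re_le_norm (s - z)).trans_lt (dist_eq_norm s z ▸ hsz)
  rw [abs_lt] at re_close
  exact ⟨by linarith, by linarith⟩

lemma norm_le_mul_one_add_abs_im {a : ℝ} (ha : 1 ≤ a) {s : ℂ} (hs : |s.re| ≤ a) :
    ‖s‖ ≤ a * (1 + |s.im|) := by
  nlinarith [Complex.norm_le_abs_re_add_abs_im s, abs_nonneg s.im]

lemma hasVerticalGrowth_riemannZeta₁ (n : ℕ) :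
    HasVerticalGrowth (verticalStrip 1 2) n 1 riemannZeta₁ := by
  refine .of_thickening differentiable_riemannZeta₁ fun β hβ ↦ ?_
  set ε := min ((β - 1) / 2) (1 / 2)
  have hε : 0 < ε := lt_min (by linarith) (by norm_num)
  have hε' : ε ≤ 1 / 2 := min_le_right _ _
  obtain ⟨C, hC, hP⟩ := exists_norm_riemannZeta₁_le hε hε'
  refine ⟨ε, hε, .of_bound (1 + C * 3 * 3 ^ (2 * ε)) (eventually_principal.2 fun s hs ↦ ?_)⟩
  obtain ⟨hs_gt, hs_lt⟩ := re_mem_of_mem_thickening_verticalStrip hs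
  have norm_le : ‖s‖ ≤ 3 * (1 + |s.im|) :=
    norm_le_mul_one_add_abs_im (by norm_num) (abs_le.2 ⟨by linarith, by linarith⟩)
  have norm_sub_one_le : ‖s - 1‖ ≤ 3 * (1 + |s.im|) := by
    simpa using norm_le_mul_one_add_abs_im (s := s - 1) (by norm_num : (1 : ℝ) ≤ 3)
      (abs_le.2 ⟨by simp; linarith, by simp; linarith⟩)
  have one_le : 1 ≤ 1 + |s.im| := by simp
  rw [Real.norm_of_nonneg (by positivity)]
  calc ‖riemannZeta₁ s‖
      ≤ 1 + C * (3 * (1 + |s.im|)) * (3 * (1 + |s.im|)) ^ (2 * ε) := by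
        refine (hP s (by linarith)).trans ?_
        gcongr
    _ = 1 + C * 3 * 3 ^ (2 * ε) * (1 + |s.im|) ^ (1 + 2 * ε) := by
        rw [Real.mul_rpow (by norm_num) (by positivity), Real.rpow_one_add' (by positivity)
          (by positivity)]
        ring
    _ ≤ (1 + |s.im|) ^ β + C * 3 * 3 ^ (2 * ε) * (1 + |s.im|) ^ β := by
        gcongr
        · exact Real.one_le_rpow one_le (by linarith)
        · linarith [min_le_left ((β - 1) / 2) (1 / 2)]
    _ = (1 + C * 3 * 3 ^ (2 * ε)) * (1 + |s.im|) ^ β := by ring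

lemma riemannZeta₁_ne_zero {s : ℂ} (hs : 1 ≤ s.re) : riemannZeta₁ s ≠ 0 := by
  rcases eq_or_ne s 1 with rfl | hs1
  · simp
  · rw [riemannZeta₁_eq_sub_one_mul hs1]
    exact mul_ne_zero (sub_ne_zero.2 hs1) (riemannZeta_ne_zero_of_one_le_re hs)

lemma pow_mul_abs_pow_le_norm_riemannZeta₁_mul {x : ℝ} (hx : 0 < x) (y : ℝ) :
    x ^ 3 * |y| ^ 5 ≤ ‖riemannZeta₁ (1 + x)‖ ^ 3 * ‖riemannZeta₁ (1 + x + y * Complex.I)‖ ^ 4 *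
      ‖riemannZeta₁ (1 + x + (2 * y : ℝ) * Complex.I)‖ := by
  have zeta_product : 1 ≤ ‖riemannZeta (1 + x)‖ ^ 3 * ‖riemannZeta (1 + x + y * Complex.I)‖ ^ 4 *
      ‖riemannZeta (1 + x + (2 * y : ℝ) * Complex.I)‖ := by
    simpa [DirichletCharacter.LFunctionTrivChar, mul_comm, mul_left_comm] using
      DirichletCharacter.norm_LFunction_product_ge_one (N := 1) 1 hx y
  have norm_eq (t : ℝ) : ‖riemannZeta₁ (1 + x + t * Complex.I)‖ =
      ‖x + t * Complex.I‖ * ‖riemannZeta (1 + x + t * Complex.I)‖ := by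
    have hne : 1 + x + t * Complex.I ≠ 1 := fun h ↦ hx.ne' (by simpa using congrArg Complex.re h)
    rw [riemannZeta₁_eq_sub_one_mul hne, add_assoc, add_sub_cancel_left, norm_mul]
  have abs_le (t : ℝ) : |t| ≤ ‖x + t * Complex.I‖ := by
    simpa using Complex.abs_im_le_norm (x + t * Complex.I)
  have norm_eq_zero : ‖riemannZeta₁ (1 + x)‖ = x * ‖riemannZeta (1 + x)‖ := by
    simpa [abs_of_pos hx] using norm_eq 0
  rw [norm_eq_zero, norm_eq, norm_eq]
  calc x ^ 3 * |y| ^ 5 = x ^ 3 * |y| ^ 4 * |y| * 1 := by ring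
    _ ≤ x ^ 3 * ‖x + y * Complex.I‖ ^ 4 * ‖x + (2 * y : ℝ) * Complex.I‖ *
        (‖riemannZeta (1 + x)‖ ^ 3 * ‖riemannZeta (1 + x + y * Complex.I)‖ ^ 4 *
          ‖riemannZeta (1 + x + (2 * y : ℝ) * Complex.I)‖) := by
      gcongr
      · exact abs_le y
      · refine le_trans ?_ (abs_le (2 * y))
        rw [abs_mul, abs_two]
        linarith [abs_nonneg y]
    _ = _ := by ring

/- For `x ≥ b ^ 4` the bound is `hpow`; for `x < b ^ 4` it is carried over from `b ^ 4` by `hlip`,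
where `b` is chosen so that this loses half of the bound. -/
lemma div_le_of_pow_le_of_lipschitz {φ : ℝ → ℝ} {c C w : ℝ} (hc : 0 < c) (hcC : c ≤ C)
    (hw : 1 ≤ w) (hφ : ∀ x ∈ Set.Ioo (0 : ℝ) 1, 0 ≤ φ x)
    (hpow : ∀ x ∈ Set.Ioo (0 : ℝ) 1, c ^ 4 * x ^ 3 ≤ (w * φ x) ^ 4)
    (hlip : ∀ x ∈ Set.Ioo (0 : ℝ) 1, ∀ x' ∈ Set.Ioo (0 : ℝ) 1, |φ x - φ x'| ≤ C * w * |x - x'|)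
    {x : ℝ} (hx : x ∈ Set.Ioo (0 : ℝ) 1) : c ^ 4 / (16 * C ^ 3 * w ^ 7) ≤ φ x := by
  have hC : 0 < C := hc.trans_le hcC
  have hw0 : 0 < w := one_pos.trans_le hw
  set b := c / (2 * C * w ^ 2) with hb_def
  have hb : 0 < b := by positivity
  have hb1 : b < 1 := by
    rw [hb_def, div_lt_one (by positivity)]
    nlinarith [one_le_pow₀ hw (n := 2)]
  have away {z : ℝ} (hz : z ∈ Set.Ioo (0 : ℝ) 1) (hbz : b ^ 4 ≤ z) : c * b ^ 3 ≤ w * φ z := by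
    refine le_of_pow_le_pow_left₀ four_ne_zero (mul_nonneg hw0.le (hφ z hz)) ?_
    calc (c * b ^ 3) ^ 4 = c ^ 4 * (b ^ 4) ^ 3 := by ring
      _ ≤ c ^ 4 * z ^ 3 := by gcongr
      _ ≤ (w * φ z) ^ 4 := hpow z hz
  have value : 2 * C * w ^ 2 * b = c := by rw [hb_def]; field_simp
  have goal_eq : c ^ 4 / (16 * C ^ 3 * w ^ 7) = c * b ^ 3 / (2 * w) := by
    rw [hb_def]; field_simp; norm_num
  rw [goal_eq, div_le_iff₀ (by positivity)]
  rcases le_total (b ^ 4) x with hbx | hbx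
  · nlinarith [away hx hbx, pow_pos hb 3]
  · have hb4 : b ^ 4 ∈ Set.Ioo (0 : ℝ) 1 := ⟨by positivity, pow_lt_one₀ hb.le hb1 four_ne_zero⟩
    have step : φ (b ^ 4) - φ x ≤ C * w * b ^ 4 := by
      refine (le_abs_self _).trans ((hlip _ hb4 _ hx).trans ?_)
      rw [abs_of_nonneg (sub_nonneg.2 hbx)]
      gcongr
      linarith [hx.1]
    have half : 2 * w * (C * w * b ^ 4) = c * b ^ 3 := by rw [← value]; ring
    nlinarith [away hb4 le_rfl]

section lowerBound

variable {ε : ℝ}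

lemma one_add_mem_verticalStrip {x : ℝ} (hx : x ∈ Set.Ioo (0 : ℝ) 1) (y : ℝ) :
    1 + x + y * Complex.I ∈ verticalStrip 1 2 :=
  ⟨by simpa using hx.1, by simp; linarith [hx.2]⟩

lemma exists_norm_riemannZeta₁_one_add_le (hε : 0 < ε) : ∃ C > 0, ∀ x ∈ Set.Ioo (0 : ℝ) 1,
    ∀ y : ℝ, ‖riemannZeta₁ (1 + x + y * Complex.I)‖ ≤ C * (1 + |y|) ^ (1 + ε) := by
  obtain ⟨C, hC, hP⟩ := ((hasVerticalGrowth_riemannZeta₁ 0).2 0 le_rfl (1 + ε)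
    (by linarith)).exists_pos
  simp only [iteratedDeriv_zero, Asymptotics.isBigOWith_principal] at hP
  refine ⟨C, hC, fun x hx y ↦ ?_⟩
  simpa [Real.norm_of_nonneg (show 0 ≤ (1 + |y|) ^ (1 + ε) by positivity)] using
    hP _ (one_add_mem_verticalStrip hx y)

lemma one_add_abs_two_mul_rpow_le (hε : 0 ≤ ε) (y : ℝ) :
    (1 + |2 * y|) ^ (1 + ε) ≤ 2 * (1 + |y|) * (2 ^ ε * (1 + |y|) ^ ε) ^ 4 := by
  have one_le : 1 ≤ 2 ^ ε * (1 + |y|) ^ ε := one_le_mul_of_one_le_of_one_le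
    (Real.one_le_rpow one_le_two hε) (Real.one_le_rpow (by simp) hε)
  calc (1 + |2 * y|) ^ (1 + ε) ≤ (2 * (1 + |y|)) ^ (1 + ε) := by
        gcongr
        rw [abs_mul, abs_two]
        linarith
    _ = 2 * (1 + |y|) * (2 ^ ε * (1 + |y|) ^ ε) := by
        rw [Real.rpow_one_add' (by positivity) (by positivity),
          Real.mul_rpow two_pos.le (by positivity)]
    _ ≤ 2 * (1 + |y|) * (2 ^ ε * (1 + |y|) ^ ε) ^ 4 := by
        gcongr
        exact le_self_pow₀ one_le four_ne_zero

lemma exists_mul_pow_le_norm_riemannZeta₁_pow (hε : 0 < ε) : ∃ c > 0, ∀ y : ℝ, 1 ≤ |y| →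
    ∀ x ∈ Set.Ioo (0 : ℝ) 1, c ^ 4 * x ^ 3 ≤
      ((1 + |y|) ^ ε * (‖riemannZeta₁ (1 + x + y * Complex.I)‖ / (1 + |y|))) ^ 4 := by
  obtain ⟨C, hC, upper⟩ := exists_norm_riemannZeta₁_one_add_le hε
  refine ⟨1 / (4 * 2 ^ ε * C), by positivity, fun y hy x hx ↦ ?_⟩
  set A := ‖riemannZeta₁ (1 + x + y * Complex.I)‖
  set Y := 1 + |y| with hY
  have hY1 : 1 ≤ Y := by simp [hY]
  have upper_two_mul : ‖riemannZeta₁ (1 + x + (2 * y : ℝ) * Complex.I)‖ ≤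
      C * (2 * Y * (2 ^ ε * Y ^ ε) ^ 4) := by
    refine (upper x hx _).trans ?_
    gcongr
    exact one_add_abs_two_mul_rpow_le hε.le y
  have upper_zero : ‖riemannZeta₁ (1 + x)‖ ≤ C := by simpa using upper x hx 0
  have product : x ^ 3 * (Y / 2) ^ 5 ≤ C ^ 3 * A ^ 4 * (C * (2 * Y * (2 ^ ε * Y ^ ε) ^ 4)) :=
    calc x ^ 3 * (Y / 2) ^ 5 ≤ x ^ 3 * |y| ^ 5 := by
          have := hx.1
          gcongr
          linarith
      _ ≤ _ := pow_mul_abs_pow_le_norm_riemannZeta₁_mul hx.1 y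
      _ ≤ C ^ 3 * A ^ 4 * (C * (2 * Y * (2 ^ ε * Y ^ ε) ^ 4)) := by gcongr
  calc (1 / (4 * 2 ^ ε * C)) ^ 4 * x ^ 3
      = (1 / (4 * 2 ^ ε * C)) ^ 4 * (32 / Y ^ 5) * (x ^ 3 * (Y / 2) ^ 5) := by field_simp; norm_num
    _ ≤ (1 / (4 * 2 ^ ε * C)) ^ 4 * (32 / Y ^ 5) *
        (C ^ 3 * A ^ 4 * (C * (2 * Y * (2 ^ ε * Y ^ ε) ^ 4))) := by gcongr
    _ = (Y ^ ε * (A / Y)) ^ 4 / 4 := by field_simp; ring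
    _ ≤ (Y ^ ε * (A / Y)) ^ 4 := div_le_self (by positivity) (by norm_num)

lemma exists_abs_norm_riemannZeta₁_div_sub_le (hε : 0 < ε) : ∃ C, ∀ y : ℝ,
    ∀ x ∈ Set.Ioo (0 : ℝ) 1, ∀ x' ∈ Set.Ioo (0 : ℝ) 1,
      |‖riemannZeta₁ (1 + x + y * Complex.I)‖ / (1 + |y|) -
        ‖riemannZeta₁ (1 + x' + y * Complex.I)‖ / (1 + |y|)| ≤
          C * (1 + |y|) ^ ε * |x - x'| := by
  obtain ⟨C, hP⟩ := ((hasVerticalGrowth_riemannZeta₁ 1).2 1 le_rfl (1 + ε)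
    (by linarith)).isBigOWith
  simp only [iteratedDeriv_one, Asymptotics.isBigOWith_principal] at hP
  refine ⟨C, fun y x hx x' hx' ↦ ?_⟩
  have : ‖riemannZeta₁ (1 + x + y * Complex.I) - riemannZeta₁ (1 + x' + y * Complex.I)‖ ≤
      C * (1 + |y|) ^ (1 + ε) * |x - x'| := by
    have mem_segment {z : ℝ} (hz : z ∈ Set.Ioo (0 : ℝ) 1) :
        1 + z + y * Complex.I ∈ Set.Ioo 1 2 ×ℂ {y} :=
      ⟨one_add_mem_verticalStrip hz y, by simp⟩
    refine (Convex.norm_image_sub_le_of_norm_deriv_le (C := C * (1 + |y|) ^ (1 + ε))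
      (fun z _ ↦ differentiable_riemannZeta₁.differentiableAt) (fun z hz ↦ ?_)
      (((convex_Ioo 1 2).linear_preimage Complex.reLm).inter
        ((convex_singleton y).linear_preimage Complex.imLm)) (mem_segment hx')
      (mem_segment hx)).trans_eq ?_
    · obtain ⟨hz_re, rfl⟩ := hz
      simpa [Real.norm_of_nonneg (show 0 ≤ (1 + |z.im|) ^ (1 + ε) by positivity)] using hP z hz_re
    · rw [add_sub_add_right_eq_sub, add_sub_add_left_eq_sub, ← Complex.ofReal_sub,
        Complex.norm_real, Real.norm_eq_abs]
  rw [← sub_div, abs_div, abs_of_pos (by positivity : 0 < 1 + |y|), div_le_iff₀ (by positivity)]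
  refine (abs_norm_sub_norm_le _ _).trans (this.trans_eq ?_)
  rw [Real.rpow_one_add' (by positivity) (by positivity)]
  ring

lemma exists_mul_rpow_le_norm_riemannZeta₁ (hε : 0 < ε) : ∃ c > 0, ∀ s ∈ verticalStrip 1 2,
    1 ≤ |s.im| → c * (1 + |s.im|) ^ (1 - 7 * ε) ≤ ‖riemannZeta₁ s‖ := by
  obtain ⟨c, hc, hpow⟩ := exists_mul_pow_le_norm_riemannZeta₁_pow hε
  obtain ⟨C, hlip⟩ := exists_abs_norm_riemannZeta₁_div_sub_le hε
  refine ⟨c ^ 4 / (16 * max c C ^ 3), by positivity, fun s hs hs_im ↦ ?_⟩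
  have lower := div_le_of_pow_le_of_lipschitz hc (le_max_left c C)
    (Real.one_le_rpow (by simp) hε.le) (fun x _ ↦ by positivity) (hpow s.im hs_im)
    (fun x hx x' hx' ↦ (hlip s.im x hx x' hx').trans (by gcongr; exact le_max_right c C))
    (x := s.re - 1) ⟨by linarith [hs.1], by linarith [hs.2]⟩
  rw [Complex.ofReal_sub, Complex.ofReal_one, add_sub_cancel, Complex.re_add_im,
    le_div_iff₀ (by positivity), ← Real.rpow_mul_natCast (by positivity)] at lower
  refine le_trans (le_of_eq ?_) lower
  rw [Real.rpow_sub (by positivity), Real.rpow_one, Nat.cast_ofNat, mul_comm 7 ε]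
  field_simp

end lowerBound

lemma isBigO_inv_riemannZeta₁ {β : ℝ} (hβ : -1 < β) :
    riemannZeta₁⁻¹ =O[𝓟 (verticalStrip 1 2)] fun s ↦ (1 + |s.im|) ^ β := by
  obtain ⟨ε, hε, hβε⟩ : ∃ ε > 0, β = -1 + 7 * ε := ⟨(β + 1) / 7, by linarith, by ring⟩
  obtain ⟨c, hc, lower⟩ := exists_mul_rpow_le_norm_riemannZeta₁ hε
  have far : riemannZeta₁⁻¹ =O[𝓟 (verticalStrip 1 2 ∩ {s | 1 ≤ |s.im|})]
      fun s ↦ (1 + |s.im|) ^ β := by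
    refine .of_bound c⁻¹ (eventually_principal.2 fun s ⟨hs, hs_im⟩ ↦ ?_)
    rw [Pi.inv_apply, norm_inv, Real.norm_of_nonneg (by positivity), hβε,
      show -1 + 7 * ε = -(1 - 7 * ε) by ring, Real.rpow_neg (by positivity), ← mul_inv]
    exact inv_anti₀ (by positivity) (lower s hs hs_im)
  have near : riemannZeta₁⁻¹ =O[𝓟 (Set.Icc 1 2 ×ℂ Set.Icc (-1) 1)]
      fun s ↦ (1 + |s.im|) ^ β := by
    have compact : IsCompact (Set.Icc 1 2 ×ℂ Set.Icc (-1) 1) :=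
      isCompact_Icc.reProdIm isCompact_Icc
    have continuousOn : ContinuousOn (riemannZeta₁⁻¹) (Set.Icc 1 2 ×ℂ Set.Icc (-1) 1) :=
      differentiable_riemannZeta₁.continuous.continuousOn.inv₀ fun s hs ↦
        riemannZeta₁_ne_zero hs.1.1
    have weight_continuousOn : ContinuousOn (fun s : ℂ ↦ (1 + |s.im|) ^ β)
        (Set.Icc 1 2 ×ℂ Set.Icc (-1) 1) :=
      (by fun_prop : Continuous fun s : ℂ ↦ 1 + |s.im|).continuousOn.rpow_const
        fun s _ ↦ .inl (by positivity)
    exact (continuousOn.isBigO_principal compact (c := (1 : ℝ)) (by simp)).trans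
      (weight_continuousOn.isBigO_rev_principal compact (fun s _ ↦ by positivity) 1)
  refine (far.sup near).mono ?_
  rw [sup_principal]
  refine principal_mono.2 fun s hs ↦ ?_
  rcases le_total 1 |s.im| with h | h
  · exact .inl ⟨hs, h⟩
  · exact .inr ⟨Set.Ioo_subset_Icc_self hs, abs_le.1 h⟩

lemma hasVerticalGrowth_id (n : ℕ) : HasVerticalGrowth (verticalStrip 1 2) n 1 fun s ↦ s := by
  refine .of_thickening differentiable_fun_id fun β hβ ↦
    ⟨1, one_pos, .of_bound 3 (eventually_principal.2 fun s hs ↦ ?_)⟩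
  obtain ⟨hs_gt, hs_lt⟩ := re_mem_of_mem_thickening_verticalStrip hs
  rw [Real.norm_of_nonneg (by positivity)]
  calc ‖s‖ ≤ 3 * (1 + |s.im|) :=
        norm_le_mul_one_add_abs_im (by norm_num) (abs_le.2 ⟨by linarith, by linarith⟩)
    _ ≤ 3 * (1 + |s.im|) ^ β := by
        gcongr
        exact Real.self_le_rpow_of_one_le (by simp) hβ.le

lemma hasVerticalGrowth_inv_id (n : ℕ) :
    HasVerticalGrowth (verticalStrip 1 2) n (-1) (fun s : ℂ ↦ s)⁻¹ := by
  have ne_zero : ∀ s ∈ verticalStrip 1 2, s ≠ 0 := by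
    rintro s ⟨hs, -⟩ rfl
    simp at hs
    linarith
  refine (hasVerticalGrowth_id n).inv (isOpen_verticalStrip 1 2) ne_zero
    (HasVerticalGrowth.zero_iff.2 ⟨differentiableOn_id.inv ne_zero, fun β hβ ↦
      .of_bound 2 (eventually_principal.2 fun s hs ↦ ?_)⟩)
  rw [Real.norm_of_nonneg (by positivity), Pi.inv_apply, norm_inv]
  have half_le : (1 + |s.im|) / 2 ≤ ‖s‖ := by
    linarith [Complex.abs_im_le_norm s, (le_abs_self _).trans (Complex.abs_re_le_norm s), hs.1]
  calc ‖s‖⁻¹ ≤ ((1 + |s.im|) / 2)⁻¹ := by gcongr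
    _ = 2 * (1 + |s.im|) ^ (-1 : ℝ) := by rw [Real.rpow_neg_one]; field_simp
    _ ≤ 2 * (1 + |s.im|) ^ β := by
        gcongr
        simp

lemma hasVerticalGrowth_inv_riemannZeta₁ (n : ℕ) :
    HasVerticalGrowth (verticalStrip 1 2) n (-1) riemannZeta₁⁻¹ := by
  have ne_zero : ∀ s ∈ verticalStrip 1 2, riemannZeta₁ s ≠ 0 :=
    fun s hs ↦ riemannZeta₁_ne_zero hs.1.le
  exact (hasVerticalGrowth_riemannZeta₁ n).inv (isOpen_verticalStrip 1 2) ne_zero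
    (HasVerticalGrowth.zero_iff.2 ⟨differentiable_riemannZeta₁.differentiableOn.inv ne_zero,
      fun _ ↦ isBigO_inv_riemannZeta₁⟩)

/-- The analytic continuation of `-ζ'(s) / (s ζ(s)) - 1 / (s - 1)` to the line `Re s = 1`. It is the
Mellin transform of the error term `ψ(x) - x`, see `mellin_psiError_inv`. -/
noncomputable def mellinPsiError (s : ℂ) : ℂ :=
  -(deriv riemannZeta₁ s * (riemannZeta₁ s)⁻¹ + 1) * s⁻¹

lemma hasVerticalGrowth_mellinPsiError (n : ℕ) :
    HasVerticalGrowth (verticalStrip 1 2) n (-1) mellinPsiError := by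
  have hS := isOpen_verticalStrip 1 2
  have logDeriv :
      HasVerticalGrowth (verticalStrip 1 2) n 0 (deriv riemannZeta₁ * riemannZeta₁⁻¹) := by
    simpa using ((hasVerticalGrowth_riemannZeta₁ (n + 1)).deriv hS).mul hS
      (hasVerticalGrowth_inv_riemannZeta₁ n)
  rw [← zero_add (-1 : ℝ)]
  exact (logDeriv.add hS (.const 1)).neg.mul hS (hasVerticalGrowth_inv_id n)

lemma exists_norm_iteratedDeriv_mellinPsiError_le (k : ℕ) :
    ∃ C, ∀ s ∈ verticalStrip 1 2, ‖iteratedDeriv k mellinPsiError s‖ ≤ C := by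
  obtain ⟨C, hC⟩ := ((hasVerticalGrowth_mellinPsiError k).2 k le_rfl 0 (by norm_num)).bound
  exact ⟨C, by simpa using hC⟩

lemma iteratedDeriv_mellin_of_isBigO_rpow {f : ℝ → ℂ} {a b : ℝ} {s : ℂ} (k : ℕ)
    (hfc : LocallyIntegrableOn f (Set.Ioi 0))
    (hf_top : f =O[atTop] (· ^ (-a))) (hs_top : s.re < a)
    (hf_bot : f =O[𝓝[>] 0] (· ^ (-b))) (hs_bot : b < s.re) :
    MellinConvergent (fun t ↦ Real.log t ^ k • f t) s ∧
      iteratedDeriv k (mellin f) s = mellin (fun t ↦ Real.log t ^ k • f t) s := by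
  induction k generalizing f a b with
  | zero => simpa using mellinConvergent_of_isBigO_rpow hfc hf_top hs_top hf_bot hs_bot
  | succ k ih =>
    have deriv_eq : deriv (mellin f) =ᶠ[𝓝 s] mellin fun t ↦ Real.log t • f t := by
      filter_upwards [Complex.continuous_re.continuousAt.eventually_lt_const hs_top,
        Complex.continuous_re.continuousAt.eventually_const_lt hs_bot] with z hz_top hz_bot
      exact (mellin_hasDerivAt_of_isBigO_rpow hfc hf_top hz_top hf_bot hz_bot).2.deriv
    obtain ⟨a', hsa', ha'⟩ := exists_between hs_top
    obtain ⟨b', hb', hb's⟩ := exists_between hs_bot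
    have log_smul := ih (hfc.continuousOn_smul isOpen_Ioi.isLocallyClosed
        (Real.continuousOn_log.mono fun t ht ↦ ne_of_gt ht))
      (isBigO_rpow_top_log_smul ha' hf_top) hsa' (isBigO_rpow_zero_log_smul hb' hf_bot) hb's
    rw [iteratedDeriv_succ', deriv_eq.iteratedDeriv_eq]
    simpa only [smul_smul, ← pow_succ] using log_smul

/-- The error term `ψ(x) - x` of the prime number theorem, cut off to `x > 1`, where the integrals
against it live. -/
noncomputable def psiError (x : ℝ) : ℝ :=
  (Set.Ioi 1).indicator (fun t ↦ Chebyshev.psi t - t) x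

lemma psiError_of_one_lt {x : ℝ} (hx : 1 < x) : psiError x = Chebyshev.psi x - x :=
  Set.indicator_of_mem hx _

lemma psiError_of_le_one {x : ℝ} (hx : x ≤ 1) : psiError x = 0 :=
  Set.indicator_of_notMem hx.not_gt _

lemma measurable_psiError : Measurable psiError :=
  (Chebyshev.psi_mono.measurable.sub measurable_id).indicator measurableSet_Ioi

lemma isBigO_psiError : psiError =O[⊤] fun x ↦ x := by
  refine .of_bound (Real.log 4 + 4) (eventually_top.2 fun x ↦ ?_)
  have log_nonneg : 0 ≤ Real.log 4 := Real.log_nonneg (by norm_num)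
  rcases le_or_gt x 1 with h | h
  · rw [psiError_of_le_one h, norm_zero]
    positivity
  · have x_nonneg : 0 ≤ x := zero_le_one.trans h.le
    rw [psiError_of_one_lt h, Real.norm_of_nonneg x_nonneg, Real.norm_eq_abs, abs_le]
    have := mul_nonneg log_nonneg x_nonneg
    constructor <;> linarith [Chebyshev.psi_nonneg x, Chebyshev.psi_le_const_mul_self x_nonneg]

lemma isBigO_psiError_inv : (fun t ↦ (psiError t⁻¹ : ℂ)) =O[⊤] fun t : ℝ ↦ t⁻¹ :=
  Complex.isBigO_ofReal_left.2 (isBigO_psiError.comp_tendsto tendsto_top)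

lemma psiError_inv_eventuallyEq_zero : (fun t ↦ (psiError t⁻¹ : ℂ)) =ᶠ[atTop] 0 := by
  filter_upwards [eventually_ge_atTop 1] with t ht
  simp [psiError_of_le_one (inv_le_one_of_one_le₀ ht)]

lemma locallyIntegrableOn_psiError_inv :
    LocallyIntegrableOn (fun t ↦ (psiError t⁻¹ : ℂ)) (Set.Ioi 0) := by
  obtain ⟨C, hC⟩ := isBigO_psiError_inv.bound
  have bound : LocallyIntegrableOn (fun t : ℝ ↦ C * t⁻¹) (Set.Ioi 0) :=
    (continuousOn_const.mul (continuousOn_inv₀.mono fun t ht ↦ ne_of_gt ht)).locallyIntegrableOn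
      measurableSet_Ioi
  have meas : Measurable fun t ↦ (psiError t⁻¹ : ℂ) :=
    Complex.measurable_ofReal.comp (measurable_psiError.comp measurable_inv)
  refine bound.mono meas.aestronglyMeasurable (.of_forall fun t ↦ ?_)
  calc ‖(psiError t⁻¹ : ℂ)‖ ≤ C * ‖t⁻¹‖ := eventually_top.1 hC t
    _ ≤ ‖C * t⁻¹‖ := by
        rw [norm_mul]
        gcongr
        exact le_abs_self C

lemma iteratedDeriv_mellin_psiError_inv (k : ℕ) {s : ℂ} (hs : 1 < s.re) :
    MellinConvergent (fun t ↦ Real.log t ^ k • (psiError t⁻¹ : ℂ)) s ∧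
      iteratedDeriv k (mellin fun t ↦ (psiError t⁻¹ : ℂ)) s =
        mellin (fun t ↦ Real.log t ^ k • (psiError t⁻¹ : ℂ)) s :=
  iteratedDeriv_mellin_of_isBigO_rpow k locallyIntegrableOn_psiError_inv
    (psiError_inv_eventuallyEq_zero.trans_isBigO (Asymptotics.isBigO_zero _ _)) (lt_add_one s.re)
    (by simpa only [Real.rpow_neg_one] using isBigO_psiError_inv.mono le_top) hs

lemma integrableOn_psi_mul_cpow {s : ℂ} (hs : 1 < s.re) :
    IntegrableOn (fun t : ℝ ↦ (Chebyshev.psi t : ℂ) * (t : ℂ) ^ (-(s + 1)))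
      (Set.Ioi 1) := by
  have bound := (integrableOn_Ioi_rpow_of_lt (neg_lt_neg hs) one_pos).const_mul (Real.log 4 + 4)
  refine bound.mono' (Measurable.aestronglyMeasurable ?_) ?_
  · exact (Complex.measurable_ofReal.comp Chebyshev.psi_mono.measurable).mul
      (Complex.measurable_ofReal.pow_const _)
  filter_upwards [ae_restrict_mem measurableSet_Ioi] with t (ht : 1 < t)
  have t_pos : 0 < t := one_pos.trans ht
  rw [norm_mul, Complex.norm_real, Complex.norm_cpow_eq_rpow_re_of_pos t_pos,
    Real.norm_of_nonneg (Chebyshev.psi_nonneg t)]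
  calc Chebyshev.psi t * t ^ (-(s + 1)).re ≤ (Real.log 4 + 4) * t * t ^ (-(s + 1)).re := by
        gcongr
        exact Chebyshev.psi_le_const_mul_self t_pos.le
    _ = (Real.log 4 + 4) * t ^ (-s.re) := by
        rw [mul_assoc, ← Real.rpow_one_add' t_pos.le (by simpa using (zero_lt_one.trans hs).ne')]
        simp

lemma integral_psi_mul_cpow {s : ℂ} (hs : 1 < s.re) :
    ∫ t in Set.Ioi (1 : ℝ), (Chebyshev.psi t : ℂ) * (t : ℂ) ^ (-(s + 1)) =
      -deriv riemannZeta s / riemannZeta s / s := by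
  have sum_eq_psi (x : ℝ) :
      ∑ n ∈ Icc 1 ⌊x⌋₊, ArithmeticFunction.vonMangoldt n = Chebyshev.psi x := rfl
  have sum_isBigO : (fun n : ℕ ↦ ∑ k ∈ Icc 1 n, ArithmeticFunction.vonMangoldt k)
      =O[atTop] fun n : ℕ ↦ (n : ℝ) ^ (1 : ℝ) := by
    refine .of_bound (Real.log 4 + 4) (.of_forall fun n ↦ ?_)
    have := sum_eq_psi n
    rw [Nat.floor_natCast] at this
    rw [this, Real.rpow_one, Real.norm_of_nonneg (Chebyshev.psi_nonneg n),
      Real.norm_of_nonneg n.cast_nonneg]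
    exact Chebyshev.psi_le_const_mul_self n.cast_nonneg
  have s_ne_zero : s ≠ 0 := Complex.ne_zero_of_one_lt_re hs
  rw [eq_div_iff s_ne_zero, mul_comm,
    ← ArithmeticFunction.LSeries_vonMangoldt_eq_deriv_riemannZeta_div hs,
    LSeries_eq_mul_integral_of_nonneg _ zero_le_one hs sum_isBigO
      fun _ ↦ ArithmeticFunction.vonMangoldt_nonneg]
  simp only [← Complex.ofReal_sum, sum_eq_psi]

lemma mellinPsiError_eq {s : ℂ} (hs : 1 < s.re) :
    mellinPsiError s = -deriv riemannZeta s / riemannZeta s / s - 1 / (s - 1) := by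
  have s_ne_zero : s ≠ 0 := Complex.ne_zero_of_one_lt_re hs
  have s_sub_one_ne_zero : s - 1 ≠ 0 := sub_ne_zero.2 (by rintro rfl; simp at hs)
  have zeta_ne_zero : riemannZeta s ≠ 0 := riemannZeta_ne_zero_of_one_le_re hs.le
  have zeta₁_eq : riemannZeta₁ =ᶠ[𝓝 s] fun z ↦ (z - 1) * riemannZeta z := by
    filter_upwards [Complex.continuous_re.continuousAt.eventually_const_lt hs] with z hz
    exact riemannZeta₁_eq_sub_one_mul (by rintro rfl; simp at hz)
  have deriv_zeta₁ : deriv riemannZeta₁ s = riemannZeta s + (s - 1) * deriv riemannZeta s := by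
    rw [zeta₁_eq.deriv_eq]
    simpa using (((hasDerivAt_id s).sub_const 1).fun_mul
      (differentiableAt_riemannZeta (sub_ne_zero.1 s_sub_one_ne_zero)).hasDerivAt).deriv
  rw [mellinPsiError, deriv_zeta₁, zeta₁_eq.eq_of_nhds]
  field_simp
  ring

lemma mellin_psiError_inv {s : ℂ} (hs : 1 < s.re) :
    mellin (fun t ↦ (psiError t⁻¹ : ℂ)) s = mellinPsiError s := by
  have neg_re_lt : (-s).re < -1 := by simpa using hs
  have integrand_eq (t : ℝ) : (t : ℂ) ^ (-s - 1) • (psiError t : ℂ) =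
      (Set.Ioi 1).indicator (fun t : ℝ ↦
        (Chebyshev.psi t : ℂ) * (t : ℂ) ^ (-(s + 1)) - (t : ℂ) ^ (-s)) t := by
    rcases lt_or_ge 1 t with ht | ht
    · have t_ne_zero : (t : ℂ) ≠ 0 := by exact_mod_cast (one_pos.trans ht).ne'
      rw [psiError_of_one_lt ht, Set.indicator_of_mem (Set.mem_Ioi.2 ht), neg_add', smul_eq_mul,
        Complex.cpow_sub _ _ t_ne_zero, Complex.cpow_one]
      push_cast
      field_simp
    · rw [psiError_of_le_one ht, Set.indicator_of_notMem (Set.notMem_Ioi.2 ht)]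
      simp
  rw [mellin_comp_inv (fun t ↦ (psiError t : ℂ)), mellin]
  simp only [integrand_eq]
  rw [setIntegral_indicator measurableSet_Ioi,
    Set.inter_eq_right.2 (Set.Ioi_subset_Ioi zero_le_one),
    integral_sub (integrableOn_psi_mul_cpow hs)
      (integrableOn_Ioi_cpow_of_lt neg_re_lt one_pos),
    integral_psi_mul_cpow hs, integral_Ioi_cpow_of_lt neg_re_lt one_pos, mellinPsiError_eq hs,
    Complex.ofReal_one, Complex.one_cpow, neg_add_eq_sub,
    ← neg_sub s 1, neg_div_neg_eq]

lemma integrable_exp_smul_of_mellinConvergent {f : ℝ → ℂ} {σ : ℝ} (hf : MellinConvergent f σ) :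
    Integrable fun u ↦ Real.exp (-σ * u) • f (Real.exp (-u)) := by
  have image_exp_neg : (fun u : ℝ ↦ Real.exp (-u)) '' Set.univ = Set.Ioi 0 := by
    rw [← Set.image_image Real.exp, Set.image_univ_of_surjective neg_surjective, Set.image_univ,
      Real.range_exp]
  have hasDerivAt_exp_neg (u : ℝ) : HasDerivAt (fun u ↦ Real.exp (-u)) (-Real.exp (-u)) u := by
    simpa using (hasDerivAt_neg u).exp
  rw [MellinConvergent, ← image_exp_neg,
    integrableOn_image_iff_integrableOn_abs_deriv_smul MeasurableSet.univ
      (fun u _ ↦ (hasDerivAt_exp_neg u).hasDerivWithinAt)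
      (Real.exp_injective.comp neg_injective).injOn, integrableOn_univ] at hf
  refine hf.congr (.of_forall fun u ↦ ?_)
  have exp_cpow : (Real.exp (-u) : ℂ) ^ ((σ : ℂ) - 1) = Real.exp (-u * (σ - 1)) := by
    rw [Real.exp_mul, Complex.ofReal_cpow (Real.exp_pos _).le]
    push_cast
    rfl
  simp only [abs_neg, Real.abs_exp, exp_cpow, Complex.coe_smul, smul_smul, ← Real.exp_add]
  ring_nf

lemma norm_fourier_comp_mul_add (f : ℝ → ℂ) {d : ℝ} (hd : 0 < d) (c y : ℝ) :
    d * ‖𝓕 (fun v ↦ f (d * v + c)) y‖ = ‖𝓕 f (y / d)‖ := by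
  let g (w : ℝ) : ℂ := Complex.exp (↑(-2 * Real.pi * w * (y / d)) * Complex.I) • f w
  let phase : ℂ := Complex.exp (↑(-2 * Real.pi * c * (y / d)) * Complex.I)
  have g_comp (v : ℝ) : g (d * v + c) =
      phase * (Complex.exp (↑(-2 * Real.pi * v * y) * Complex.I) • f (d * v + c)) := by
    simp only [g, phase, smul_eq_mul]
    rw [← mul_assoc, ← Complex.exp_add, ← add_mul, ← Complex.ofReal_add]
    congr 4
    field_simp
    ring
  have substitution : ∫ v, g (d * v + c) = d⁻¹ • ∫ w, g w := by
    rw [Measure.integral_comp_mul_left (fun v ↦ g (v + c)),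
      integral_add_right_eq_self, abs_of_pos (inv_pos.2 hd)]
  simp only [g_comp, integral_const_mul] at substitution
  have norm_phase : ‖phase‖ = 1 := Complex.norm_exp_ofReal_mul_I _
  rw [Real.fourier_real_eq_integral_exp_smul, Real.fourier_real_eq_integral_exp_smul,
    ← one_mul ‖∫ v, _‖, ← norm_phase, ← norm_mul, substitution, norm_smul, norm_inv,
    Real.norm_of_nonneg hd.le, mul_inv_cancel_left₀ hd.ne']

lemma mul_norm_integral_fourier_mul_le {f h : ℝ → ℂ} {C : ℝ} (hf : Integrable f)
    (hC : ∀ y, ‖𝓕 f y‖ ≤ C) (hh : Integrable h) {d : ℝ} (hd : 0 < d) (c : ℝ) :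
    d * ‖∫ v, 𝓕 h v * f (d * v + c)‖ ≤ C * ∫ y, ‖h y‖ := by
  have hf' : Integrable fun v ↦ f (d * v + c) :=
    (hf.comp_add_right c).comp_mul_left' hd.ne'
  have flip : ∫ v, 𝓕 h v * f (d * v + c) = ∫ y, h y * 𝓕 (fun v ↦ f (d * v + c)) y := by
    simpa using! VectorFourier.integral_fourierIntegral_smul_eq_flip (L := innerₗ ℝ)
      Real.continuous_fourierChar continuous_inner hh hf'
  have norm_le (y : ℝ) : ‖h y * 𝓕 (fun v ↦ f (d * v + c)) y‖ ≤ d⁻¹ * (C * ‖h y‖) := by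
    rw [norm_mul, mul_comm, ← mul_assoc]
    gcongr
    rw [inv_mul_eq_div, le_div_iff₀' hd, norm_fourier_comp_mul_add f hd]
    exact hC _
  calc d * ‖∫ v, 𝓕 h v * f (d * v + c)‖
      ≤ d * ∫ y, d⁻¹ * (C * ‖h y‖) := by
        rw [flip]
        gcongr
        exact norm_integral_le_of_norm_le ((hh.norm.const_mul C).const_mul d⁻¹)
          (.of_forall norm_le)
    _ = C * ∫ y, ‖h y‖ := by
        rw [integral_const_mul, mul_inv_cancel_left₀ hd.ne',
          integral_const_mul]

/-- The function `u ↦ uᵏ e^{-σu} (ψ(eᵘ) - eᵘ)` for `u > 0`. Its Fourier transform at `y` is, up to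
sign, the `k`-th derivative of `mellinPsiError` at `σ + 2 π i y`. -/
noncomputable def weightedPsiError (k : ℕ) (σ u : ℝ) : ℝ :=
  Real.exp (-σ * u) * (u ^ k * psiError (Real.exp u))

lemma ofReal_weightedPsiError (k : ℕ) (σ u : ℝ) : (weightedPsiError k σ u : ℂ) =
    (-1) ^ k * (Real.exp (-σ * u) •
      (Real.log (Real.exp (-u)) ^ k • (psiError (Real.exp (-u))⁻¹ : ℂ))) := by
  have neg_one_pow_mul : (-1) ^ k * ((-u : ℝ) : ℂ) ^ k = u ^ k := by simp [← mul_pow]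
  rw [weightedPsiError, Real.log_exp, ← Real.exp_neg, neg_neg, mul_smul_comm, Complex.real_smul,
    Complex.real_smul, Complex.ofReal_pow, ← mul_assoc (_ ^ k), neg_one_pow_mul]
  push_cast
  rfl

lemma integrable_weightedPsiError (k : ℕ) {σ : ℝ} (hσ : 1 < σ) :
    Integrable (weightedPsiError k σ) := by
  have integrable_ofReal : Integrable fun u ↦ (weightedPsiError k σ u : ℂ) := by
    simp only [ofReal_weightedPsiError]
    exact (integrable_exp_smul_of_mellinConvergent
      (iteratedDeriv_mellin_psiError_inv k (by simpa using hσ)).1).const_mul _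
  simpa using integrable_ofReal.re

lemma norm_fourier_weightedPsiError (k : ℕ) {σ : ℝ} (hσ : 1 < σ) (y : ℝ) :
    ‖𝓕 (fun u ↦ (weightedPsiError k σ u : ℂ)) y‖ =
      ‖iteratedDeriv k mellinPsiError (σ + (2 * Real.pi * y : ℝ) * Complex.I)‖ := by
  set s : ℂ := σ + (2 * Real.pi * y : ℝ) * Complex.I with hs
  have s_re : s.re = σ := by simp [hs]
  have s_im : s.im / (2 * Real.pi) = y := by
    rw [hs]
    simp [Real.pi_ne_zero]
  have mellin_eq : mellinPsiError =ᶠ[𝓝 s] mellin fun t ↦ (psiError t⁻¹ : ℂ) := by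
    filter_upwards [Complex.continuous_re.continuousAt.eventually_const_lt (hσ.trans_eq s_re.symm)]
      with z hz using (mellin_psiError_inv hz).symm
  rw [mellin_eq.iteratedDeriv_eq,
    (iteratedDeriv_mellin_psiError_inv k (hσ.trans_eq s_re.symm)).2, mellin_eq_fourier, s_re, s_im]
  simp only [ofReal_weightedPsiError, Real.fourier_real_eq_integral_exp_smul, smul_eq_mul,
    mul_left_comm _ ((-1 : ℂ) ^ k), integral_const_mul]
  simp

lemma exists_mul_norm_integral_bump_mul_weightedPsiError_le (φ : ContDiffBump (0 : ℝ)) (k : ℕ) :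
    ∃ C, ∀ σ ∈ Set.Ioo 1 2, ∀ c d : ℝ, 0 < d →
      d * |∫ v, φ v * weightedPsiError k σ (d * v + c)| ≤ C := by
  obtain ⟨C, hC⟩ := exists_norm_iteratedDeriv_mellinPsiError_le k
  have φ_compactSupport : HasCompactSupport fun u ↦ (φ u : ℂ) :=
    φ.hasCompactSupport.comp_left Complex.ofReal_zero
  let h : 𝓢(ℝ, ℂ) :=
    𝓕⁻ (φ_compactSupport.toSchwartzMap (Complex.ofRealCLM.contDiff.comp φ.contDiff))
  have fourier_h (v : ℝ) : 𝓕 (h : ℝ → ℂ) v = φ v := by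
    rw [← SchwartzMap.fourier_coe, FourierTransform.fourier_fourierInv_eq]
    rfl
  refine ⟨C * ∫ y, ‖h y‖, fun σ hσ c d hd ↦ ?_⟩
  have pairing := mul_norm_integral_fourier_mul_le (f := fun u ↦ weightedPsiError k σ u)
    (integrable_weightedPsiError k hσ.1).ofReal
    (fun y ↦ (norm_fourier_weightedPsiError k hσ.1 y).trans_le
      (hC _ (by simpa [verticalStrip] using hσ)))
    h.integrable hd c
  simpa only [fourier_h, ← Complex.ofReal_mul, integral_complex_ofReal, Complex.norm_real,
    Real.norm_eq_abs] using pairing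

lemma two_mul_rIn_mul_le_integral {c m : ℝ} (φ : ContDiffBump c) {w : ℝ → ℝ} (hm : 0 ≤ m)
    (hw : ∀ v ∈ Metric.closedBall c φ.rOut, m ≤ w v)
    (hφw : Integrable fun v ↦ φ v * w v) :
    2 * φ.rIn * m ≤ ∫ v, φ v * w v := by
  calc 2 * φ.rIn * m ≤ (∫ v, φ v) * m := by
        gcongr
        simpa [Real.volume_real_closedBall φ.rIn_pos.le] using
          φ.measure_closedBall_le_integral volume
    _ = ∫ v, φ v * m := (integral_mul_const m _).symm
    _ ≤ ∫ v, φ v * w v := by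
        refine integral_mono (φ.integrable.mul_const m) hφw fun v ↦ ?_
        by_cases hv : v ∈ Metric.closedBall c φ.rOut
        · exact mul_le_mul_of_nonneg_left (hw v hv) φ.nonneg
        · simp [φ.zero_of_le_dist (not_le.1 hv).le]

/- The interval lies to the right of `u₀` if `g u₀` is too large, to the left if it is too
small. -/
lemma exists_forall_le_mul_sub_exp {g : ℝ → ℝ} (hg : Monotone g) {u₀ η : ℝ} (hη₀ : 0 ≤ η)
    (hη₁ : η ≤ 1) (hu₀ : η * Real.exp u₀ ≤ |g u₀ - Real.exp u₀|) :
    ∃ s c, |s| = 1 ∧ |c - u₀| ≤ η / 8 ∧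
      ∀ v, |v - c| ≤ η / 8 → η / 4 * Real.exp v ≤ s * (g v - Real.exp v) := by
  have exp_sub_le {x y : ℝ} (h : y - η / 4 ≤ x) : (1 - η / 4) * Real.exp y ≤ Real.exp x := by
    calc (1 - η / 4) * Real.exp y ≤ Real.exp (-(η / 4)) * Real.exp y := by
          gcongr
          exact Real.one_sub_le_exp_neg _
      _ ≤ Real.exp x := by
          rw [← Real.exp_add]
          gcongr
          linarith
  rcases le_abs.1 hu₀ with above | below
  · refine ⟨1, u₀ + η / 8, abs_one, by simp [abs_le, div_nonneg hη₀], fun v hv ↦ ?_⟩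
    obtain ⟨hv_ge, hv_le⟩ := abs_le.1 hv
    have g_ge : (1 + η / 4) * Real.exp v ≤ g v := by
      calc (1 + η / 4) * Real.exp v ≤ (1 + η) * (1 - η / 4) * Real.exp v := by
            gcongr
            nlinarith
        _ ≤ (1 + η) * Real.exp u₀ := by
            rw [mul_assoc]
            gcongr
            exact exp_sub_le (by linarith)
        _ ≤ g u₀ := by linarith
        _ ≤ g v := hg (by linarith)
    linarith
  · refine ⟨-1, u₀ - η / 8, by simp, by simp [abs_le, div_nonneg hη₀], fun v hv ↦ ?_⟩
    obtain ⟨hv_ge, hv_le⟩ := abs_le.1 hv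
    have g_le : g v ≤ (1 - η / 4) * Real.exp v := by
      calc g v ≤ g u₀ := hg (by linarith)
        _ ≤ (1 - η) * Real.exp u₀ := by linarith
        _ ≤ (1 - η / 4) * ((1 - η / 4) * Real.exp u₀) := by
            rw [← mul_assoc]
            gcongr
            nlinarith
        _ ≤ (1 - η / 4) * Real.exp v := by
            gcongr
            · linarith
            · exact exp_sub_le (by linarith)
    linarith

/- For `σ - 1 = (u₀ + 1)⁻¹` the weight `e ^ (-σu)` is still comparable to `e ^ (-u)` near `u₀`. -/
lemma le_mul_weightedPsiError {k : ℕ} {s ε u₀ u : ℝ} (hε : 0 ≤ ε) (hu₀ : 2 ≤ u₀)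
    (hu : |u - u₀| ≤ 1) (h : ε * Real.exp u ≤ s * psiError (Real.exp u)) :
    Real.exp (-1) * (u₀ / 2) ^ k * ε ≤ s * weightedPsiError k (1 + (u₀ + 1)⁻¹) u := by
  obtain ⟨u_ge, u_le⟩ := abs_le.1 hu
  have exp_ge : Real.exp (-1) ≤ Real.exp (-(1 + (u₀ + 1)⁻¹) * u) * Real.exp u := by
    rw [← Real.exp_add, Real.exp_le_exp]
    have : (u₀ + 1)⁻¹ * u ≤ 1 := by
      rw [inv_mul_le_one₀ (by linarith)]
      linarith
    linarith
  calc Real.exp (-1) * (u₀ / 2) ^ k * ε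
      ≤ Real.exp (-(1 + (u₀ + 1)⁻¹) * u) * Real.exp u * u ^ k * ε := by
        gcongr
        linarith
    _ = Real.exp (-(1 + (u₀ + 1)⁻¹) * u) * (u ^ k * (ε * Real.exp u)) := by ring
    _ ≤ Real.exp (-(1 + (u₀ + 1)⁻¹) * u) * (u ^ k * (s * psiError (Real.exp u))) := by
        have : 0 ≤ u := by linarith
        gcongr
    _ = s * weightedPsiError k (1 + (u₀ + 1)⁻¹) u := by
        rw [weightedPsiError]
        ring

lemma exists_two_mul_mul_le_of_le_weightedPsiError (k : ℕ) :
    ∃ C, ∀ σ ∈ Set.Ioo 1 2, ∀ s c d m : ℝ, |s| = 1 → 0 < d → 0 ≤ m →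
      (∀ u, |u - c| ≤ 2 * d → m ≤ s * weightedPsiError k σ u) → 2 * d * m ≤ C := by
  let φ : ContDiffBump (0 : ℝ) := ⟨1, 2, one_pos, one_lt_two⟩
  obtain ⟨C, hC⟩ := exists_mul_norm_integral_bump_mul_weightedPsiError_le φ k
  refine ⟨C, fun σ hσ s c d m hs hd hm h ↦ ?_⟩
  have weighted_ge : ∀ v ∈ Metric.closedBall 0 φ.rOut,
      m ≤ s * weightedPsiError k σ (d * v + c) := by
    intro v hv
    refine h _ ?_
    rw [add_sub_cancel_right, abs_mul, abs_of_pos hd, mul_comm]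
    gcongr
    simpa using hv
  have integrable : Integrable fun v ↦
      φ v * (s * weightedPsiError k σ (d * v + c)) := by
    have shifted : Integrable fun u ↦ s * weightedPsiError k σ (u + c) :=
      ((integrable_weightedPsiError k hσ.1).comp_add_right c).const_mul s
    refine (shifted.comp_mul_left' hd.ne').bdd_mul (c := 1) φ.continuous.aestronglyMeasurable
      (.of_forall fun v ↦ ?_)
    rw [Real.norm_of_nonneg φ.nonneg]
    exact φ.le_one
  calc 2 * d * m = d * (2 * φ.rIn * m) := by ring
    _ ≤ d * ∫ v, φ v * (s * weightedPsiError k σ (d * v + c)) := by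
        gcongr
        exact two_mul_rIn_mul_le_integral φ hm weighted_ge integrable
    _ = d * (s * ∫ v, φ v * weightedPsiError k σ (d * v + c)) := by
        simp only [mul_left_comm _ s, integral_const_mul]
    _ ≤ d * |s * ∫ v, φ v * weightedPsiError k σ (d * v + c)| :=
        mul_le_mul_of_nonneg_left (le_abs_self _) hd.le
    _ ≤ C := by
        rw [abs_mul, hs, one_mul]
        exact hC σ hσ c d hd

lemma psiError_exp {u : ℝ} (hu : 0 < u) :
    psiError (Real.exp u) = Chebyshev.psi (Real.exp u) - Real.exp u :=
  psiError_of_one_lt (Real.one_lt_exp_iff.2 hu)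

lemma exists_sq_mul_pow_le (k : ℕ) : ∃ C, ∀ u₀ η, 2 ≤ u₀ → 0 < η → η ≤ 1 →
    η * Real.exp u₀ ≤ |psiError (Real.exp u₀)| → η ^ 2 * u₀ ^ k ≤ C := by
  obtain ⟨C, hC⟩ := exists_two_mul_mul_le_of_le_weightedPsiError k
  refine ⟨C * (32 * 2 ^ k * Real.exp 1), fun u₀ η hu₀ hη hη₁ hE ↦ ?_⟩
  rw [psiError_exp (by linarith)] at hE
  obtain ⟨s, c, hs, hc, persists⟩ :=
    exists_forall_le_mul_sub_exp (Chebyshev.psi_mono.comp Real.exp_monotone) hη.le hη₁ hE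
  have hσ : 1 + (u₀ + 1)⁻¹ ∈ Set.Ioo 1 2 := by
    have := inv_lt_one_of_one_lt₀ (show 1 < u₀ + 1 by linarith)
    have : 0 < (u₀ + 1)⁻¹ := inv_pos.2 (by linarith)
    constructor <;> linarith
  have two_mul_mul_le : 2 * (η / 16) * (Real.exp (-1) * (u₀ / 2) ^ k * (η / 4)) ≤ C := by
    refine hC _ hσ s c _ _ hs (by positivity) (by positivity) fun u hu ↦ ?_
    have near_u₀ : |u - u₀| ≤ 1 := by linarith [abs_sub_le u c u₀]
    refine le_mul_weightedPsiError (by positivity) hu₀ near_u₀ ?_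
    rw [psiError_exp (by linarith [(abs_le.1 near_u₀).1])]
    exact persists u (by linarith)
  calc η ^ 2 * u₀ ^ k = 2 * (η / 16) * (Real.exp (-1) * (u₀ / 2) ^ k * (η / 4)) *
          (32 * 2 ^ k * Real.exp 1) := by
        rw [Real.exp_neg, div_pow]
        field_simp
        ring
    _ ≤ C * (32 * 2 ^ k * Real.exp 1) := by gcongr

lemma isBigO_psi_sub_self (A : ℕ) :
    (fun x ↦ Chebyshev.psi x - x) =O[atTop] fun x ↦ x / Real.log x ^ A := by
  obtain ⟨K, hK⟩ := isBigO_psiError.bound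
  obtain ⟨C, hC⟩ := exists_sq_mul_pow_le (2 * A)
  set M := max K 1
  have M_pos : 0 < M := lt_max_of_lt_right one_pos
  refine .of_bound (M * √C) ?_
  filter_upwards [eventually_ge_atTop (Real.exp 2)] with x hx
  have x_pos : 0 < x := (Real.exp_pos 2).trans_le hx
  have log_ge : 2 ≤ Real.log x := (Real.le_log_iff_exp_le x_pos).2 hx
  have x_gt_one : 1 < x := (Real.log_pos_iff x_pos.le).1 (by linarith)
  let η := |psiError x| / (M * x)
  have abs_psiError_eq : |psiError x| = M * η * x := by
    simp only [η]
    field_simp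
  have η_le_one : η ≤ 1 := by
    refine div_le_one_of_le₀ ?_ (by positivity)
    have : |psiError x| ≤ K * |x| := eventually_top.1 hK x
    rw [abs_of_pos x_pos] at this
    exact this.trans (by gcongr; exact le_max_left _ _)
  have η_mul_le : η * Real.log x ^ A ≤ √C := by
    rcases (show 0 ≤ η by positivity).eq_or_lt with h | η_pos
    · simp [← h]
    refine Real.le_sqrt_of_sq_le ?_
    rw [mul_pow, ← pow_mul, mul_comm A]
    refine hC _ η log_ge η_pos η_le_one ?_
    rw [Real.exp_log x_pos, abs_psiError_eq, mul_assoc]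
    exact le_mul_of_one_le_left (by positivity) (le_max_right _ _)
  rw [← psiError_of_one_lt x_gt_one, Real.norm_eq_abs, Real.norm_of_nonneg (by positivity)]
  calc |psiError x| = M * (η * Real.log x ^ A) * (x / Real.log x ^ A) := by
        rw [abs_psiError_eq]
        field_simp
    _ ≤ M * √C * (x / Real.log x ^ A) := by gcongr

lemma sum_mul_vonMangoldt_eq_sub_integral {f f' : ℝ → ℝ}
    (hf : ∀ t ∈ Set.Ici 1, HasDerivAt f (f' t) t) (hf' : ContinuousOn f' (Set.Ici 1)) (N : ℕ) :
    ∑ k ∈ Icc 0 N, f k * ArithmeticFunction.vonMangoldt k =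
      f N * Chebyshev.psi N - ∫ t in Set.Ioc (1 : ℝ) N, f' t * Chebyshev.psi t := by
  have deriv_eq : Set.EqOn (deriv f) f' (Set.Icc 1 N) := fun t ht ↦ (hf t ht.1).deriv
  rw [sum_mul_eq_sub_integral_mul₀' _ ArithmeticFunction.vonMangoldt.map_zero N
    fun t ht ↦ (hf t ht.1).differentiableAt]
  · simp only [Chebyshev.psi_eq_sum_Icc, Nat.floor_natCast]
    congr 1
    refine setIntegral_congr_fun measurableSet_Ioc fun t ht ↦ ?_
    simp only [deriv_eq (Set.Ioc_subset_Icc_self ht)]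
  · exact ((hf'.mono Set.Icc_subset_Ici_self).congr deriv_eq).integrableOn_Icc

lemma sum_mul_vonMangoldt_sub_integral {f f' : ℝ → ℝ}
    (hf : ∀ t ∈ Set.Ici 1, HasDerivAt f (f' t) t) (hf' : ContinuousOn f' (Set.Ici 1)) {N : ℕ}
    (hN : 1 ≤ N) :
    ∑ k ∈ Icc 0 N, f k * ArithmeticFunction.vonMangoldt k - ∫ t in (1 : ℝ)..N, f t =
      f N * (Chebyshev.psi N - N) + f 1 - ∫ t in (1 : ℝ)..N, f' t * (Chebyshev.psi t - t) := by
  have one_le : (1 : ℝ) ≤ N := by exact_mod_cast hN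
  have uIcc_subset : Set.uIcc (1 : ℝ) N ⊆ Set.Ici 1 := by
    rw [Set.uIcc_of_le one_le]
    exact Set.Icc_subset_Ici_self
  have hf'_uIcc := hf'.mono uIcc_subset
  have parts : ∫ t in (1 : ℝ)..N, f' t * t = f N * N - f 1 - ∫ t in (1 : ℝ)..N, f t := by
    simpa [mul_comm] using intervalIntegral.integral_mul_deriv_eq_deriv_mul (u := fun t ↦ t)
      (fun t _ ↦ hasDerivAt_id' t) (fun t ht ↦ hf t (uIcc_subset ht))
      intervalIntegrable_const hf'_uIcc.intervalIntegrable
  simp only [mul_sub]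
  rw [sum_mul_vonMangoldt_eq_sub_integral hf hf', ← intervalIntegral.integral_of_le one_le,
    intervalIntegral.integral_sub
      (Chebyshev.psi_mono.intervalIntegrable.continuousOn_mul hf'_uIcc)
      (hf'_uIcc.fun_mul (continuousOn_id' _)).intervalIntegrable, parts]
  ring

lemma tendsto_sum_mul_vonMangoldt_sub_integral {f f' : ℝ → ℝ}
    (hf : ∀ t ∈ Set.Ici 1, HasDerivAt f (f' t) t) (hf' : ContinuousOn f' (Set.Ici 1))
    (h_lim : Tendsto (fun t ↦ f t * (Chebyshev.psi t - t)) atTop (𝓝 0))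
    (h_int : IntegrableOn (fun t ↦ f' t * (Chebyshev.psi t - t)) (Set.Ioi 1)) :
    Tendsto (fun N : ℕ ↦ ∑ k ∈ Icc 0 N, f k * ArithmeticFunction.vonMangoldt k -
        ∫ t in (1 : ℝ)..N, f t)
      atTop (𝓝 (f 1 - ∫ t in Set.Ioi 1, f' t * (Chebyshev.psi t - t))) := by
  have limit : Tendsto (fun N : ℕ ↦ f N * (Chebyshev.psi N - N) + f 1 -
      ∫ t in (1 : ℝ)..N, f' t * (Chebyshev.psi t - t))
      atTop (𝓝 (0 + f 1 - ∫ t in Set.Ioi 1, f' t * (Chebyshev.psi t - t))) :=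
    ((h_lim.comp tendsto_natCast_atTop_atTop).add_const _).sub
      (intervalIntegral_tendsto_integral_Ioi 1 h_int tendsto_natCast_atTop_atTop)
  rw [zero_add] at limit
  refine limit.congr' ?_
  filter_upwards [eventually_ge_atTop 1] with N hN
  exact (sum_mul_vonMangoldt_sub_integral hf hf' hN).symm

lemma integrableOn_mul_psi_sub_self {g : ℝ → ℝ} (hg : ContinuousOn g (Set.Ici 1))
    (hO : (fun t ↦ g t * (Chebyshev.psi t - t)) =O[atTop] fun t ↦ t⁻¹ / Real.log t ^ 2) :
    IntegrableOn (fun t ↦ g t * (Chebyshev.psi t - t)) (Set.Ioi 1) := by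
  have locallyIntegrableOn : LocallyIntegrableOn
      (fun t ↦ g t * (Chebyshev.psi t - t)) (Set.Ici 1) :=
    ((Chebyshev.psi_mono.locallyIntegrable.sub continuous_id.locallyIntegrable).locallyIntegrableOn
      _).continuousOn_mul hg isClosed_Ici.isLocallyClosed
  exact (locallyIntegrableOn.integrableOn_of_isBigO_atTop hO
    ⟨_, Ioi_mem_atTop 2, integrableOn_inv_div_log_sq_Ioi one_lt_two⟩).mono_set
      Set.Ioi_subset_Ici_self

lemma isBigO_mul_psi_sub_self {g : ℝ → ℝ} {m n : ℕ}
    (hg : g =O[atTop] fun t ↦ Real.log t ^ m / t ^ (n + 1)) :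
    (fun t ↦ g t * (Chebyshev.psi t - t)) =O[atTop] fun t ↦ (t ^ n)⁻¹ / Real.log t ^ 2 := by
  refine (hg.mul (isBigO_psi_sub_self (m + 2))).congr' .rfl ?_
  filter_upwards [eventually_gt_atTop 1] with t ht
  have := Real.log_pos ht
  field_simp
  ring

lemma hasDerivAt_log_pow_div (l : ℕ) {t : ℝ} (ht : t ≠ 0) :
    HasDerivAt (fun t ↦ Real.log t ^ l / t)
      ((l * Real.log t ^ (l - 1) - Real.log t ^ l) / t ^ 2) t := by
  refine (((Real.hasDerivAt_log ht).fun_pow l).fun_div (hasDerivAt_id' t) ht).congr_deriv ?_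
  field_simp

lemma continuousOn_deriv_log_pow_div (l : ℕ) :
    ContinuousOn (fun t ↦ (l * Real.log t ^ (l - 1) - Real.log t ^ l) / t ^ 2) (Set.Ici 1) := by
  intro t ht
  have : t ≠ 0 := (zero_lt_one.trans_le ht).ne'
  fun_prop (disch := positivity)

lemma isBigO_deriv_log_pow_div (l : ℕ) :
    (fun t ↦ (l * Real.log t ^ (l - 1) - Real.log t ^ l) / t ^ 2) =O[atTop]
      fun t ↦ Real.log t ^ l / t ^ 2 := by
  have pow_pred : (fun t ↦ Real.log t ^ (l - 1)) =O[atTop] fun t ↦ Real.log t ^ l := by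
    refine .of_bound 1 ?_
    filter_upwards [Real.tendsto_log_atTop.eventually_ge_atTop 1] with t ht
    rw [one_mul, norm_pow, norm_pow]
    exact pow_le_pow_right₀ (ht.trans (le_abs_self _)) (Nat.sub_le l 1)
  simpa only [div_eq_mul_inv] using
    ((pow_pred.const_mul_left _).sub (Asymptotics.isBigO_refl _ _)).mul
      (Asymptotics.isBigO_refl (fun t : ℝ ↦ (t ^ 2)⁻¹) atTop)

lemma integral_log_pow_div (l : ℕ) {x : ℝ} (hx : 1 ≤ x) :
    ∫ t in (1 : ℝ)..x, Real.log t ^ l / t = Real.log x ^ (l + 1) / (l + 1) := by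
  have ne_zero : ∀ t ∈ Set.uIcc 1 x, t ≠ 0 := by
    intro t ht
    rw [Set.uIcc_of_le hx] at ht
    exact (zero_lt_one.trans_le ht.1).ne'
  rw [intervalIntegral.integral_eq_sub_of_hasDerivAt
    (f := fun t ↦ Real.log t ^ (l + 1) / (l + 1)) (f' := fun t ↦ Real.log t ^ l / t)]
  · simp
  · intro t ht
    refine (((Real.hasDerivAt_log (ne_zero t ht)).fun_pow (l + 1)).div_const _).congr_deriv ?_
    push_cast
    field_simp
  · refine ContinuousOn.intervalIntegrable fun t ht ↦ ?_
    have := ne_zero t ht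
    fun_prop (disch := positivity)

lemma sum_Icc_two_mul_vonMangoldt (f : ℕ → ℝ) (N : ℕ) :
    ∑ k ∈ Icc 2 N, f k * ArithmeticFunction.vonMangoldt k =
      ∑ k ∈ Icc 0 N, f k * ArithmeticFunction.vonMangoldt k := by
  refine sum_subset (Icc_subset_Icc_left zero_le_two) fun k hk hk' ↦ ?_
  have : k < 2 := by grind
  interval_cases k <;> simp

/-- Existence of the generalized Stieltjes-type constants: for every natural number `l`,
the sequence `N ↦ ∑_{k=2}^N Λ(k)(log k)^l / k − (log N)^{l+1}/(l+1)` converges as `N → ∞`,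
where `Λ` is the von Mangoldt function. -/
theorem stieltjes_type_constants_exist (l : ℕ) :
    ∃ L : ℝ, Filter.Tendsto
      (fun N : ℕ => (∑ k ∈ Finset.Icc 2 N,
          ArithmeticFunction.vonMangoldt k * (Real.log k) ^ l / k) -
        (Real.log N) ^ (l + 1) / (l + 1))
      Filter.atTop (𝓝 L) := by
  have lim_boundary :
      Tendsto (fun t ↦ Real.log t ^ l / t * (Chebyshev.psi t - t)) atTop (𝓝 0) := by
    have isBigO_inv_log_sq : (fun t ↦ Real.log t ^ l / t * (Chebyshev.psi t - t)) =O[atTop]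
        fun t ↦ (Real.log t ^ 2)⁻¹ := by
      simpa using isBigO_mul_psi_sub_self (g := fun t ↦ Real.log t ^ l / t) (m := l) (n := 0)
        (by simpa using Asymptotics.isBigO_refl _ _)
    exact isBigO_inv_log_sq.trans_tendsto
      ((tendsto_pow_atTop two_ne_zero).comp Real.tendsto_log_atTop).inv_tendsto_atTop
  have integrable := integrableOn_mul_psi_sub_self (continuousOn_deriv_log_pow_div l)
    (by simpa using isBigO_mul_psi_sub_self (n := 1) (isBigO_deriv_log_pow_div l))
  refine ⟨_, (tendsto_sum_mul_vonMangoldt_sub_integral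
    (fun t ht ↦ hasDerivAt_log_pow_div l (zero_lt_one.trans_le ht).ne')
    (continuousOn_deriv_log_pow_div l) lim_boundary integrable).congr' ?_⟩
  filter_upwards [eventually_ge_atTop 1] with N hN
  rw [integral_log_pow_div l (by exact_mod_cast hN), ← sum_Icc_two_mul_vonMangoldt]
  simp only [div_mul_eq_mul_div, mul_comm]
end

section
/- There exists a function g : ℂ → ℂ which is analytic on the open disk {s : |s| < 1/2} and satisfies g(s) = −ζ'(s+1)/ζ(s+1) − 1/s for all s with 0 < |s| < 1/2 (in particular ζ(s+1) ≠ 0 for 0 < |s| < 1/2); moreover, for every integer n ≥ 1 and every real r with 0 < r < 1/2, (1/(2πi)) ∮_{|s|=r} ((1 + 1/s)^n − 1) · (−ζ'(s+1)/ζ(s+1)) ds = Σ_{l=1}^{n} C(n,l) · g^{(l−1)}(0)/(l−1)!, the circle being traversed counterclockwise. -/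
open Complex Finset

/-!
The entire function `ζ₁(s) = (s - 1) ζ(s)` has no zero in the region `‖s - 1‖ < re s`: Abel
summation gives `ζ₁(s) = s (1 - (s - 1) ∫₁^∞ {t} t^(-s-1) dt)`, and the integral is at most
`1 / re s` in absolute value. This region contains the disk `‖s - 1‖ < 1/2`, on which therefore
`-ζ'/ζ = g + 1/(s - 1)` with `g = -ζ₁'/ζ₁` analytic. Expanding `(1 + 1/(s - 1))^n - 1` in powers
of `1/(s - 1)`, the pole of `-ζ'/ζ` contributes no residue because every power is at least one, and
Cauchy's formula for derivatives evaluates the rest.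
-/

section MellinTail

open MeasureTheory Filter Topology

variable {E : Type*} [NormedAddCommGroup E] [NormedSpace ℂ E] {f g : ℝ → E} {C : ℝ} {s : ℂ}

/-- The Mellin transform of `f` truncated to `(1, ∞)`, with the sign of the variable reversed so
that the transform of a bounded function converges for `0 < re s`. It is the integral occurring in
Abel summation of a Dirichlet series. -/
noncomputable def mellinTail (f : ℝ → E) (s : ℂ) : E :=
  ∫ t in Set.Ioi (1 : ℝ), (t : ℂ) ^ (-s - 1) • f t

lemma mellinTail_eq_mellin_indicator (f : ℝ → E) (s : ℂ) :
    mellinTail f s = mellin ((Set.Ioi 1).indicator f) (-s) := by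
  have hinter : Set.Ioi (0 : ℝ) ∩ Set.Ioi 1 = Set.Ioi 1 :=
    Set.inter_eq_right.mpr (Set.Ioi_subset_Ioi zero_le_one)
  simp only [mellinTail, mellin, ← Set.indicator_smul_apply _ (fun t : ℝ ↦ (t : ℂ) ^ (-s - 1)) f]
  rw [setIntegral_indicator measurableSet_Ioi, hinter]

lemma mellinTail_congr (h : Set.EqOn f g (Set.Ioi 1)) : mellinTail f s = mellinTail g s :=
  setIntegral_congr_fun measurableSet_Ioi fun t ht ↦ congrArg ((t : ℂ) ^ (-s - 1) • ·) (h ht)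

lemma mellinTail_sub (hf : IntegrableOn (fun t : ℝ ↦ (t : ℂ) ^ (-s - 1) • f t) (Set.Ioi 1))
    (hg : IntegrableOn (fun t : ℝ ↦ (t : ℂ) ^ (-s - 1) • g t) (Set.Ioi 1)) :
    mellinTail (fun t ↦ f t - g t) s = mellinTail f s - mellinTail g s := by
  simp only [mellinTail, smul_sub]
  exact integral_sub hf hg

lemma integrableOn_cpow_smul_of_norm_le (hf : AEStronglyMeasurable f (volume.restrict (Set.Ioi 1)))
    (hC : ∀ t ∈ Set.Ioi (1 : ℝ), ‖f t‖ ≤ C) (hs : 0 < s.re) :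
    IntegrableOn (fun t : ℝ ↦ (t : ℂ) ^ (-s - 1) • f t) (Set.Ioi 1) :=
  have hexp : (-s - 1).re < -1 := by rw [sub_re, neg_re, one_re]; linarith
  (integrableOn_Ioi_cpow_of_lt hexp one_pos).smul_bdd C hf
    ((ae_restrict_mem measurableSet_Ioi).mono hC)

lemma norm_mellinTail_le (hC : ∀ t ∈ Set.Ioi (1 : ℝ), ‖f t‖ ≤ C) (hs : 0 < s.re) :
    ‖mellinTail f s‖ ≤ C / s.re := by
  have hexp : -s.re - 1 < -1 := by linarith
  have hbound : ∀ t ∈ Set.Ioi (1 : ℝ), ‖(t : ℂ) ^ (-s - 1) • f t‖ ≤ C * t ^ (-s.re - 1) := by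
    intro t ht
    have ht0 : 0 < t := one_pos.trans ht
    rw [norm_smul, norm_cpow_eq_rpow_re_of_pos ht0, mul_comm]
    simpa using mul_le_mul_of_nonneg_right (hC t ht) (by positivity)
  calc ‖mellinTail f s‖
      ≤ ∫ t in Set.Ioi (1 : ℝ), C * t ^ (-s.re - 1) :=
        norm_integral_le_of_norm_le ((integrableOn_Ioi_rpow_of_lt hexp one_pos).const_mul C)
          ((ae_restrict_mem measurableSet_Ioi).mono hbound)
    _ = C / s.re := by
        rw [integral_const_mul, integral_Ioi_rpow_of_lt hexp one_pos, sub_add_cancel, Real.one_rpow,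
          neg_div_neg_eq, mul_one_div]

lemma differentiableAt_mellinTail (hf : AEStronglyMeasurable f (volume.restrict (Set.Ioi 1)))
    (hC : ∀ t ∈ Set.Ioi (1 : ℝ), ‖f t‖ ≤ C) (hs : 0 < s.re) :
    DifferentiableAt ℂ (mellinTail f) s := by
  set φ : ℝ → E := (Set.Ioi 1).indicator f
  have hφ_meas : AEStronglyMeasurable φ :=
    (aestronglyMeasurable_indicator_iff measurableSet_Ioi).2 hf
  have hC₀ : 0 ≤ C := (norm_nonneg _).trans (hC 2 (Set.mem_Ioi.2 one_lt_two))
  have hφ_le (t : ℝ) : ‖φ t‖ ≤ C := by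
    by_cases ht : t ∈ Set.Ioi 1
    · simpa only [φ, Set.indicator_of_mem ht] using hC t ht
    · simpa only [φ, Set.indicator_of_notMem ht, norm_zero] using hC₀
  have hφ_int : LocallyIntegrable φ :=
    (locallyIntegrable_const C).mono hφ_meas
      (.of_forall fun t ↦ (hφ_le t).trans (Real.le_norm_self C))
  have hφ_top : φ =O[atTop] fun t : ℝ ↦ t ^ (-(0 : ℝ)) :=
    .of_bound C (.of_forall fun t ↦ by simpa using hφ_le t)
  have hφ_bot : φ =O[𝓝[>] 0] fun t : ℝ ↦ t ^ (-(-s.re - 1)) := by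
    have hφ_zero : φ =ᶠ[𝓝[>] 0] 0 := by
      filter_upwards [nhdsWithin_le_nhds (Iio_mem_nhds one_pos)] with t ht
      exact Set.indicator_of_notMem ht.not_gt f
    exact hφ_zero.trans_isBigO (Asymptotics.isBigO_zero _ _)
  have hmellin : DifferentiableAt ℂ (mellin φ) (-s) :=
    mellin_differentiableAt_of_isBigO_rpow (hφ_int.locallyIntegrableOn _) hφ_top
      (by simpa using hs) hφ_bot (by simp)
  rw [funext (mellinTail_eq_mellin_indicator f)]
  exact hmellin.comp s differentiableAt_id.neg

end MellinTail

section RiemannZeta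

open MeasureTheory Filter Topology

variable {s : ℂ}

lemma aestronglyMeasurable_ofReal_fract {μ : Measure ℝ} :
    AEStronglyMeasurable (fun t : ℝ ↦ ((Int.fract t : ℝ) : ℂ)) μ :=
  (measurable_ofReal.comp measurable_fract).aestronglyMeasurable

lemma norm_ofReal_fract_le_one (t : ℝ) : ‖((Int.fract t : ℝ) : ℂ)‖ ≤ 1 := by
  rw [norm_real, Real.norm_of_nonneg (Int.fract_nonneg t)]
  exact (Int.fract_lt_one t).le

lemma ofReal_cpow_neg_sub_one_smul_self {t : ℝ} (ht : t ∈ Set.Ioi (1 : ℝ)) (s : ℂ) :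
    (t : ℂ) ^ (-s - 1) • (t : ℂ) = (t : ℂ) ^ (-s) := by
  have ht0 : (t : ℂ) ≠ 0 := ofReal_ne_zero.2 (one_pos.trans ht).ne'
  rw [cpow_sub _ _ ht0, cpow_one, smul_eq_mul, div_mul_cancel₀ _ ht0]

lemma integrableOn_cpow_smul_ofReal (hs : 1 < s.re) :
    IntegrableOn (fun t : ℝ ↦ (t : ℂ) ^ (-s - 1) • (t : ℂ)) (Set.Ioi 1) :=
  (integrableOn_Ioi_cpow_of_lt (by simpa using hs) one_pos).congr_fun
    (fun _ ht ↦ (ofReal_cpow_neg_sub_one_smul_self ht s).symm) measurableSet_Ioi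

lemma mellinTail_ofReal (hs : 1 < s.re) :
    mellinTail (fun t : ℝ ↦ (t : ℂ)) s = 1 / (s - 1) := by
  rw [mellinTail, setIntegral_congr_fun measurableSet_Ioi
    fun _ ht ↦ ofReal_cpow_neg_sub_one_smul_self ht s,
    integral_Ioi_cpow_of_lt (by simpa using hs) one_pos, ofReal_one, one_cpow,
    show -s + 1 = -(s - 1) by ring, neg_div_neg_eq]

lemma riemannZeta_eq_mul_mellinTail_floor (hs : 1 < s.re) :
    riemannZeta s = s * mellinTail (fun t : ℝ ↦ (⌊t⌋₊ : ℂ)) s := by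
  have hcount : (fun n : ℕ ↦ ∑ k ∈ Icc 1 n, ‖(1 : ℕ → ℂ) k‖) =O[atTop] fun n ↦ (n : ℝ) ^ (1 : ℝ) :=
    .of_bound 1 (.of_forall fun n ↦ by simp)
  rw [← LSeries_one_eq_riemannZeta hs, LSeries_eq_mul_integral' 1 zero_le_one hs hcount, mellinTail]
  simp only [Pi.one_apply, sum_const, Nat.card_Icc, Nat.add_sub_cancel, nsmul_eq_mul, mul_one,
    smul_eq_mul, mul_comm, neg_add']

lemma riemannZeta_eq_mul_sub_mellinTail_fract (hs : 1 < s.re) :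
    riemannZeta s = s * (1 / (s - 1) - mellinTail (fun t ↦ ((Int.fract t : ℝ) : ℂ)) s) := by
  have hfloor : Set.EqOn (fun t : ℝ ↦ (⌊t⌋₊ : ℂ)) (fun t ↦ (t : ℂ) - (Int.fract t : ℝ))
      (Set.Ioi 1) := by
    intro t ht
    have ht0 : 0 ≤ t := (one_pos.trans ht).le
    have hreal : (⌊t⌋₊ : ℝ) = t - Int.fract t := by
      rw [natCast_floor_eq_intCast_floor ht0, Int.self_sub_fract]
    simpa only [ofReal_natCast, ofReal_sub] using congrArg ofReal hreal
  rw [riemannZeta_eq_mul_mellinTail_floor hs, mellinTail_congr hfloor,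
    mellinTail_sub (integrableOn_cpow_smul_ofReal hs)
      (integrableOn_cpow_smul_of_norm_le aestronglyMeasurable_ofReal_fract
        (fun t _ ↦ norm_ofReal_fract_le_one t) (one_pos.trans hs)),
    mellinTail_ofReal hs]

lemma riemannZeta₁_eq_mul_one_sub_mellinTail_fract (hs : 0 < s.re) :
    riemannZeta₁ s =
      s * (1 - (s - 1) * mellinTail (fun t ↦ ((Int.fract t : ℝ) : ℂ)) s) := by
  set F : ℂ → ℂ := mellinTail fun t ↦ ((Int.fract t : ℝ) : ℂ) with hF
  have hopen (a : ℝ) : IsOpen {z : ℂ | a < z.re} := isOpen_lt continuous_const continuous_re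
  have hzeta₁ : AnalyticOnNhd ℂ riemannZeta₁ {z | 0 < z.re} :=
    differentiable_riemannZeta₁.differentiableOn.analyticOnNhd (hopen 0)
  have hformula : AnalyticOnNhd ℂ (fun z ↦ z * (1 - (z - 1) * F z)) {z | 0 < z.re} := by
    refine DifferentiableOn.analyticOnNhd (fun z hz ↦ ?_) (hopen 0)
    have hFz : DifferentiableAt ℂ F z :=
      differentiableAt_mellinTail aestronglyMeasurable_ofReal_fract
        (fun t _ ↦ norm_ofReal_fract_le_one t) hz
    exact DifferentiableAt.differentiableWithinAt (by fun_prop)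
  have heq : riemannZeta₁ =ᶠ[𝓝 2] fun z ↦ z * (1 - (z - 1) * F z) := by
    filter_upwards [(hopen 1).mem_nhds (show 1 < (2 : ℂ).re by simp)] with z hz
    have hz1 : z ≠ 1 := by rintro rfl; simp at hz
    have hz10 : z - 1 ≠ 0 := sub_ne_zero.2 hz1
    have hzeta := riemannZeta_eq_mul_sub_mellinTail_fract hz
    rw [← hF, riemannZeta_eq_inv_sub_mul hz1, inv_mul_eq_iff_eq_mul₀ hz10] at hzeta
    rw [hzeta]
    field_simp
  exact hzeta₁.eqOn_of_preconnected_of_eventuallyEq hformula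
    (convex_halfSpace_re_gt 0).isPreconnected (show 0 < (2 : ℂ).re by simp) heq hs

lemma riemannZeta₁_ne_zero_of_norm_sub_one_lt_re (hs : ‖s - 1‖ < s.re) : riemannZeta₁ s ≠ 0 := by
  have hre : 0 < s.re := (norm_nonneg _).trans_lt hs
  set I := mellinTail (fun t ↦ ((Int.fract t : ℝ) : ℂ)) s
  have hI : ‖I‖ ≤ 1 / s.re := norm_mellinTail_le (fun t _ ↦ norm_ofReal_fract_le_one t) hre
  have hlt : ‖(s - 1) * I‖ < 1 := calc
    ‖(s - 1) * I‖ ≤ ‖s - 1‖ * (1 / s.re) := by rw [norm_mul]; gcongr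
    _ < 1 := by rwa [mul_one_div, div_lt_one hre]
  rw [riemannZeta₁_eq_mul_one_sub_mellinTail_fract hre]
  refine mul_ne_zero (fun h ↦ by simp [h] at hre) (sub_ne_zero.2 fun h ↦ ?_)
  rw [← h, norm_one] at hlt
  exact lt_irrefl _ hlt

lemma riemannZeta₁_ne_zero_of_norm_sub_one_lt_half (hs : ‖s - 1‖ < 1 / 2) :
    riemannZeta₁ s ≠ 0 := by
  have hre : |s.re - 1| ≤ ‖s - 1‖ := by simpa using abs_re_le_norm (s - 1)
  exact riemannZeta₁_ne_zero_of_norm_sub_one_lt_re (by linarith [(abs_le.1 hre).1])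

lemma analyticAt_logDeriv_riemannZeta₁ (hs : riemannZeta₁ s ≠ 0) :
    AnalyticAt ℂ (logDeriv riemannZeta₁) s :=
  have hzeta₁ := differentiable_riemannZeta₁.analyticAt s
  hzeta₁.deriv.div hzeta₁ hs

lemma riemannZeta_ne_zero_of_riemannZeta₁_ne_zero (hs1 : s ≠ 1) (hs : riemannZeta₁ s ≠ 0) :
    riemannZeta s ≠ 0 := by
  rw [riemannZeta_eq_inv_sub_mul hs1]
  exact mul_ne_zero (inv_ne_zero (sub_ne_zero.2 hs1)) hs

lemma logDeriv_riemannZeta (hs1 : s ≠ 1) (hs : riemannZeta₁ s ≠ 0) :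
    logDeriv riemannZeta s = logDeriv riemannZeta₁ s - 1 / (s - 1) := by
  have hs10 : s - 1 ≠ 0 := sub_ne_zero.2 hs1
  rw [logDeriv_apply, logDeriv_apply, deriv_riemannZeta_eq_neg_inv_sub_sq_mul_add hs1,
    riemannZeta_eq_inv_sub_mul hs1]
  field_simp
  ring

end RiemannZeta

section SimplePole

lemma one_add_pow_sub_one_eq_sum {R : Type*} [Ring R] (x : R) (n : ℕ) :
    (1 + x) ^ n - 1 = ∑ l ∈ Icc 1 n, (n.choose l : R) * x ^ l := by
  rw [add_comm, (Commute.one_right x).add_pow, range_eq_Ico, sum_eq_sum_Ico_succ_bot n.succ_pos]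
  simp only [one_pow, mul_one, pow_zero, Nat.choose_zero_right, Nat.cast_one, add_sub_cancel_left,
    zero_add, Nat.succ_eq_add_one, Ico_add_one_right_eq_Icc, Nat.cast_comm]

variable {f : ℂ → ℂ} {c : ℂ} {R : ℝ}

lemma continuousOn_sphere_div_sub_center (hR : R ≠ 0) (a : ℂ) :
    ContinuousOn (fun z ↦ a / (z - c)) (Metric.sphere c R) :=
  continuousOn_const.div (by fun_prop) fun _ hz ↦ sub_ne_zero.2 (Metric.ne_of_mem_sphere hz hR)

lemma circleIntegrable_one_div_pow_mul (hR : 0 < R) (hf : ContinuousOn f (Metric.sphere c R))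
    (m : ℕ) : CircleIntegrable (fun z ↦ (1 / (z - c)) ^ m * f z) c R :=
  (((continuousOn_sphere_div_sub_center hR.ne' 1).pow m).mul hf).circleIntegrable hR.le

lemma circleIntegral_one_div_pow_mul_add_simple_pole (hR : 0 < R)
    (hf : DiffContOnCl ℂ f (Metric.ball c R)) (a : ℂ) (m : ℕ) :
    (∮ z in C(c, R), (1 / (z - c)) ^ (m + 1) * (f z + a / (z - c))) =
      2 * Real.pi * I * (iteratedDeriv m f c / m.factorial) := by
  have hfc : ContinuousOn f (Metric.sphere c R) :=
    hf.continuousOn_ball.mono Metric.sphere_subset_closedBall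
  have hregular : (∮ z in C(c, R), (1 / (z - c)) ^ (m + 1) * f z) =
      2 * Real.pi * I * (iteratedDeriv m f c / m.factorial) := by
    have hcauchy := hf.circleIntegral_one_div_sub_center_pow_smul hR m
    simp only [smul_eq_mul, ← one_div_pow] at hcauchy
    rw [hcauchy, div_mul_eq_mul_div, mul_div_assoc]
  have hpole : (∮ z in C(c, R), (1 / (z - c)) ^ (m + 2) * a) = 0 := by
    have hzpow (z : ℂ) : (1 / (z - c)) ^ (m + 2) * a = a * (z - c) ^ (-(m + 2 : ℕ) : ℤ) := by
      rw [zpow_neg, zpow_natCast, one_div, inv_pow, mul_comm]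
    simp_rw [hzpow]
    rw [circleIntegral.integral_const_mul, circleIntegral.integral_sub_zpow_of_ne (by lia),
      mul_zero]
  have hsplit (z : ℂ) : (1 / (z - c)) ^ (m + 1) * (f z + a / (z - c)) =
      (1 / (z - c)) ^ (m + 1) * f z + (1 / (z - c)) ^ (m + 2) * a := by ring
  simp_rw [hsplit]
  rw [circleIntegral.integral_add (circleIntegrable_one_div_pow_mul hR hfc _)
    (circleIntegrable_one_div_pow_mul hR continuousOn_const _), hregular, hpole, add_zero]

lemma circleIntegral_one_add_one_div_pow_sub_one_mul_add_simple_pole (hR : 0 < R)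
    (hf : DiffContOnCl ℂ f (Metric.ball c R)) (a : ℂ) (n : ℕ) :
    (1 / (2 * Real.pi * I)) *
        (∮ z in C(c, R), ((1 + 1 / (z - c)) ^ n - 1) * (f z + a / (z - c))) =
      ∑ l ∈ Icc 1 n, (n.choose l : ℂ) * iteratedDeriv (l - 1) f c / ((l - 1).factorial : ℂ) := by
  have hcont : ContinuousOn (fun z ↦ f z + a / (z - c)) (Metric.sphere c R) :=
    (hf.continuousOn_ball.mono Metric.sphere_subset_closedBall).add
      (continuousOn_sphere_div_sub_center hR.ne' a)
  have hint (l : ℕ) : CircleIntegrable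
      (fun z ↦ (n.choose l : ℂ) * ((1 / (z - c)) ^ l * (f z + a / (z - c)))) c R :=
    (circleIntegrable_one_div_pow_mul hR hcont l).const_smul
  simp only [one_add_pow_sub_one_eq_sum, sum_mul, mul_assoc (Nat.cast _)]
  rw [circleIntegral.integral_fun_sum fun l _ ↦ hint l, mul_sum]
  refine sum_congr rfl fun l hl ↦ ?_
  obtain ⟨m, rfl⟩ := Nat.exists_eq_add_of_le' (mem_Icc.1 hl).1
  rw [circleIntegral.integral_const_mul, circleIntegral_one_div_pow_mul_add_simple_pole hR hf,
    Nat.add_sub_cancel]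
  field_simp [two_pi_I_ne_zero]

end SimplePole

/-- There is a function `g`, analytic on the disk `|s| < 1/2`, with
`g(s) = -ζ'(s+1)/ζ(s+1) - 1/s` for `0 < |s| < 1/2` (in particular `ζ(s+1) ≠ 0` there),
and for every `n ≥ 1` and `0 < r < 1/2`,
`(1/(2πi)) ∮_{|s|=r} ((1+1/s)^n - 1)(-ζ'(s+1)/ζ(s+1)) ds
  = ∑_{l=1}^n C(n,l) g^{(l-1)}(0)/(l-1)!`. -/
theorem li_stieltjes_contour_integral :
    ∃ g : ℂ → ℂ, AnalyticOnNhd ℂ g (Metric.ball (0 : ℂ) (1 / 2)) ∧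
      (∀ s : ℂ, 0 < ‖s‖ → ‖s‖ < 1 / 2 →
        riemannZeta (s + 1) ≠ 0 ∧
          g s = -deriv riemannZeta (s + 1) / riemannZeta (s + 1) - 1 / s) ∧
      (∀ n : ℕ, 1 ≤ n → ∀ r : ℝ, 0 < r → r < 1 / 2 →
        (1 / (2 * Real.pi * Complex.I)) *
            (∮ s in C(0, r), ((1 + 1 / s) ^ n - 1) *
              (-deriv riemannZeta (s + 1) / riemannZeta (s + 1))) =
          ∑ l ∈ Finset.Icc 1 n, (n.choose l : ℂ) *
            iteratedDeriv (l - 1) g 0 / ((l - 1).factorial : ℂ)) := by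
  have hlogDeriv (s : ℂ) (h0 : 0 < ‖s‖) (hs : ‖s‖ < 1 / 2) : riemannZeta (s + 1) ≠ 0 ∧
      -logDeriv riemannZeta₁ (s + 1) =
        -deriv riemannZeta (s + 1) / riemannZeta (s + 1) - 1 / s := by
    have hs1 : s + 1 ≠ 1 := by simpa using norm_pos_iff.1 h0
    have hne : riemannZeta₁ (s + 1) ≠ 0 :=
      riemannZeta₁_ne_zero_of_norm_sub_one_lt_half (by simpa using hs)
    refine ⟨riemannZeta_ne_zero_of_riemannZeta₁_ne_zero hs1 hne, ?_⟩
    rw [neg_div, ← logDeriv_apply, logDeriv_riemannZeta hs1 hne, add_sub_cancel_right]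
    ring
  have hana : AnalyticOnNhd ℂ (fun s ↦ -logDeriv riemannZeta₁ (s + 1)) (Metric.ball 0 (1 / 2)) :=
    fun s hs ↦ ((analyticAt_logDeriv_riemannZeta₁ (riemannZeta₁_ne_zero_of_norm_sub_one_lt_half
      (by simpa using hs))).comp_of_eq (by fun_prop) rfl).neg
  refine ⟨fun s ↦ -logDeriv riemannZeta₁ (s + 1), hana, hlogDeriv, fun n _ r hr hr2 ↦ ?_⟩
  have hdiff := (hana.differentiableOn.mono (Metric.closedBall_subset_ball hr2)).diffContOnCl_ball
    subset_rfl
  rw [← circleIntegral_one_add_one_div_pow_sub_one_mul_add_simple_pole hr hdiff 1 n]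
  congr 1
  refine circleIntegral.integral_congr hr.le fun s hs ↦ ?_
  have hsr : ‖s‖ = r := by simpa using hs
  simp only [sub_zero, (hlogDeriv s (hsr ▸ hr) (hsr ▸ hr2)).2, sub_add_cancel]
end
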